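/- Let n ≥ 2, let Φ: ℝⁿ → [0,∞) be positively 1-homogeneous and convex, let B be a convex body in ℝⁿ and H a closed half-space with inner normal ν_H such that B ∩ ∂H has nonempty (n−1)-dimensional interior in ∂H. Let b ∈ B \ H and C = 𝒞(b, B ∩ ∂H), C_lat = 𝒞(b, ∂(B ∩ ∂H)). Then ∫_{C_lat} Φ(ν_C) dℋ^{n−1} ≤ ∫_{∂B ∩ H^c} Φ(ν_B) dℋ^{n−1}, where H^c = ℝⁿ \ H. -/

import Mathlib

open MeasureTheory Metric

local notation "⟪" x ", " y "⟫" => @inner ℝ _ _ x y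

/-- The cone `𝒞(p, S)`: union of all segments joining `p` to points of `S`. -/
def coneOver {n : ℕ} (p : EuclideanSpace ℝ (Fin n)) (S : Set (EuclideanSpace ℝ (Fin n))) :
    Set (EuclideanSpace ℝ (Fin n)) :=
  {y | ∃ t ∈ Set.Icc (0 : ℝ) 1, ∃ x ∈ S, y = (1 - t) • p + t • x}

/-- Relative boundary of `E` inside the ambient set `P`. -/
def relBoundary {n : ℕ} (P E : Set (EuclideanSpace ℝ (Fin n))) :
    Set (EuclideanSpace ℝ (Fin n)) :=
  E \ {x | ∃ ε > (0 : ℝ), ball x ε ∩ P ⊆ E}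

/-- `v` is an inner unit normal of the convex set `E` at the boundary point `x`. -/
def IsInnerNormalAt {n : ℕ} (E : Set (EuclideanSpace ℝ (Fin n)))
    (x v : EuclideanSpace ℝ (Fin n)) : Prop :=
  ‖v‖ = 1 ∧ ∀ y ∈ E, 0 ≤ ⟪v, y - x⟫

/-!
Up to an error `ε` on the unit sphere, `Φ` is a maximum of finitely many linear minorants
`⟪p i, ·⟫`, so it is enough to treat each of them on the part of the boundary of the cone `C` where
it is the first to attain the maximum at the normal. Slide the points of the `i`-th part in
direction `-p i` until they leave `B`. By the support inequality for `C`, no two points of a part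
slide along the same line and the shadows of different parts on the boundary of `B` are disjoint;
as `B ∩ ∂H ⊆ C`, they do not reach `H`. Up to a null set, the shadow projects onto the projection
of the part to `(p i)^⊥`, so the area formula for this projection gives
`∫ ⟪p i, ν_C⟫ ≤ ∫ ⟪p i, ν_B⟫ ≤ ∫ Φ(ν_B)`, the first integral being over the part and the other
two over its shadow.
-/

open Set Filter Topology Module Function
open scoped ENNReal NNReal EuclideanSpace

section ProjOrth

variable {E : Type*} [NormedAddCommGroup E] [InnerProductSpace ℝ E]

/-- Orthogonal projection onto the hyperplane `p^⊥`, as a map into that hyperplane. -/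
noncomputable abbrev projOrth (p : E) : E →L[ℝ] (ℝ ∙ p)ᗮ := (ℝ ∙ p)ᗮ.orthogonalProjectionOnto

lemma projOrth_eq_projOrth_iff {p x y : E} :
    projOrth p x = projOrth p y ↔ ∃ t : ℝ, t • p = x - y := by
  rw [← sub_eq_zero, ← map_sub, Submodule.orthogonalProjectionOnto_eq_zero_iff,
    Submodule.orthogonal_orthogonal, Submodule.mem_span_singleton]

lemma coe_projOrth (p x : E) : (projOrth p x : E) = x - (⟪p, x⟫ / ‖p‖ ^ 2) • p := by
  rw [Submodule.coe_orthogonalProjectionOnto_apply, Submodule.starProjection_orthogonal_val,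
    Submodule.starProjection_singleton]
  rfl

lemma coe_projOrth_of_norm_eq_one {v : E} (hv : ‖v‖ = 1) (x : E) :
    (projOrth v x : E) = x - ⟪v, x⟫ • v := by
  rw [coe_projOrth, hv, one_pow, div_one]

lemma inner_projOrth (p x y : E) :
    ⟪projOrth p x, projOrth p y⟫ = ⟪x, y⟫ - ⟪p, x⟫ * ⟪p, y⟫ / ‖p‖ ^ 2 := by
  rw [Submodule.inner_orthogonalProjectionOnto_eq_of_mem_right, coe_projOrth, inner_sub_right,
    inner_smul_right, real_inner_comm p x]
  ring

theorem normDet_projOrth_comp_subtype [FiniteDimensional ℝ E] {p v : E} (hp : p ≠ 0)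
    (hv : ‖v‖ = 1) :
    ((projOrth p).toLinearMap ∘ₗ (ℝ ∙ v)ᗮ.subtype).normDet = |⟪p, v⟫| / ‖p‖ := by
  set Q := (projOrth p).toLinearMap ∘ₗ (ℝ ∙ v)ᗮ.subtype
  have inner_proj (a : (ℝ ∙ v)ᗮ) : ⟪projOrth v p, a⟫ = ⟪p, (a : E)⟫ :=
    Submodule.inner_orthogonalProjectionOnto_eq_of_mem_right a p
  have adjoint_comp : Q.adjoint ∘ₗ Q = LinearMap.transvection
      (innerₗ (ℝ ∙ v)ᗮ (projOrth v p)) (-(‖p‖ ^ 2)⁻¹ • projOrth v p) := by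
    refine LinearMap.ext fun a => ext_inner_left ℝ fun b => ?_
    rw [LinearMap.comp_apply, LinearMap.adjoint_inner_right, LinearMap.transvection.apply,
      inner_add_right, inner_smul_right, inner_smul_right, innerₗ_apply_apply, inner_proj,
      real_inner_comm (projOrth v p) b, inner_proj, Submodule.coe_inner _ b a]
    exact (inner_projOrth p b a).trans (by ring)
  have normDet_sq : Q.normDet ^ 2 = (|⟪p, v⟫| / ‖p‖) ^ 2 := by
    have : ‖p‖ ^ 2 ≠ 0 := by simpa using hp
    have h := Q.normDet_sq
    rw [adjoint_comp, LinearMap.transvection.det, innerₗ_apply_apply, inner_smul_right,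
      inner_projOrth, hv, real_inner_self_eq_norm_sq, real_inner_comm p v] at h
    rw [div_pow, sq_abs]
    refine (show Q.normDet ^ 2 = _ from h).trans ?_
    field_simp
    ring
  exact (sq_eq_sq₀ Q.normDet_nonneg (by positivity)).1 normDet_sq

end ProjOrth

section Approximation

variable {U V : Type*} [NormedAddCommGroup U] [InnerProductSpace ℝ U] [NormedAddCommGroup V]
  [InnerProductSpace ℝ V]

lemma approximatesLinearOn_linearIsometryEquiv_comp {f : U → V} {A : U →L[ℝ] V} {s : Set U}
    {δ : ℝ≥0} (hf : ApproximatesLinearOn f A s δ) (T : V ≃ₗᵢ[ℝ] U) :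
    ApproximatesLinearOn (T ∘ f) ((T.toContinuousLinearEquiv : V →L[ℝ] U) ∘L A) s δ := by
  intro x hx y hy
  have h : T (f x) - T (f y) - T (A (x - y)) = T (f x - f y - A (x - y)) := by simp only [map_sub]
  calc ‖T (f x) - T (f y) - T (A (x - y))‖ = ‖f x - f y - A (x - y)‖ := by rw [h, T.norm_map]
    _ ≤ δ * ‖x - y‖ := hf x hx y hy

variable [FiniteDimensional ℝ U] [FiniteDimensional ℝ V]

lemma exists_linearIsometryEquiv_abs_det_comp (hUV : finrank ℝ U = finrank ℝ V) (A : U →L[ℝ] V) :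
    ∃ T : V ≃ₗᵢ[ℝ] U,
      |((T.toContinuousLinearEquiv : V →L[ℝ] U) ∘L A).det| = A.toLinearMap.normDet := by
  let T := (stdOrthonormalBasis ℝ V).equiv (stdOrthonormalBasis ℝ U) (finCongr hUV.symm)
  refine ⟨T, ?_⟩
  have h := LinearMap.normDet_comp_of_finrank_eq A.toLinearMap T.toLinearIsometry.toLinearMap hUV
  rw [LinearMap.normDet_eq_abs_det, LinearIsometry.normDet_eq_one, one_mul] at h
  exact h

variable [MeasurableSpace U] [BorelSpace U] [MeasurableSpace V] [BorelSpace V] {d : ℕ}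

theorem eventually_hausdorffMeasure_image_le_of_normDet_lt (hU : finrank ℝ U = d)
    (hV : finrank ℝ V = d) (A : U →L[ℝ] V) {m : ℝ≥0} (hm : A.toLinearMap.normDet < m) :
    ∀ᶠ δ in 𝓝[>] (0 : ℝ≥0), ∀ (s : Set U) (f : U → V), ApproximatesLinearOn f A s δ →
      μH[(d : ℝ)] (f '' s) ≤ m * μH[(d : ℝ)] s := by
  subst hU
  obtain ⟨T, hT⟩ := exists_linearIsometryEquiv_abs_det_comp hV.symm A
  rw [← hT, ← Real.coe_toNNReal _ (abs_nonneg _), NNReal.coe_lt_coe, ← ENNReal.coe_lt_coe] at hm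
  filter_upwards [addHaar_image_le_mul_of_det_lt μH[finrank ℝ U] _ hm] with δ hδ s f hf
  have h := hδ s _ (approximatesLinearOn_linearIsometryEquiv_comp hf T)
  rwa [image_comp, T.isometry.hausdorffMeasure_image (.inl (Nat.cast_nonneg _))] at h

theorem eventually_le_hausdorffMeasure_image_of_lt_normDet (hU : finrank ℝ U = d)
    (hV : finrank ℝ V = d) (A : U →L[ℝ] V) {m : ℝ≥0} (hm : m < A.toLinearMap.normDet) :
    ∀ᶠ δ in 𝓝[>] (0 : ℝ≥0), ∀ (s : Set U) (f : U → V), ApproximatesLinearOn f A s δ →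
      m * μH[(d : ℝ)] s ≤ μH[(d : ℝ)] (f '' s) := by
  subst hU
  obtain ⟨T, hT⟩ := exists_linearIsometryEquiv_abs_det_comp hV.symm A
  rw [← hT, ← Real.coe_toNNReal _ (abs_nonneg _), NNReal.coe_lt_coe, ← ENNReal.coe_lt_coe] at hm
  filter_upwards [mul_le_addHaar_image_of_lt_det μH[finrank ℝ U] _ hm] with δ hδ s f hf
  have h := hδ s _ (approximatesLinearOn_linearIsometryEquiv_comp hf T)
  rwa [image_comp, T.isometry.hausdorffMeasure_image (.inl (Nat.cast_nonneg _))] at h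

end Approximation

section Flat

variable {E : Type*} [NormedAddCommGroup E] [InnerProductSpace ℝ E]

/-- `A` is `δ`-flat in the direction `v`: for `‖v‖ = 1`, the sine of the angle between a secant of
`A` and the hyperplane `v^⊥` is at most `δ`. -/
def IsFlat (v : E) (δ : ℝ≥0) (A : Set E) : Prop :=
  ∀ x ∈ A, ∀ y ∈ A, |⟪v, x - y⟫| ≤ δ * ‖x - y‖

namespace IsFlat

variable {v : E} {δ : ℝ≥0} {A : Set E}

lemma mono {δ' : ℝ≥0} (h : IsFlat v δ A) (hδ : δ ≤ δ') : IsFlat v δ' A := fun x hx y hy =>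
  (h x hx y hy).trans (by gcongr)

lemma mul_norm_sub_le (h : IsFlat v δ A) (hv : ‖v‖ = 1) {x y : E} (hx : x ∈ A) (hy : y ∈ A) :
    (1 - δ) * ‖x - y‖ ≤ ‖projOrth v x - projOrth v y‖ := by
  have decomp : ‖x - y‖ ≤ ‖projOrth v x - projOrth v y‖ + |⟪v, x - y⟫| := calc
    ‖x - y‖ = ‖(projOrth v (x - y) : E) + ⟪v, x - y⟫ • v‖ := by
      rw [coe_projOrth_of_norm_eq_one hv, sub_add_cancel]
    _ ≤ ‖projOrth v (x - y)‖ + |⟪v, x - y⟫| := by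
      simpa [norm_smul, hv] using norm_add_le (projOrth v (x - y) : E) (⟪v, x - y⟫ • v)
    _ = ‖projOrth v x - projOrth v y‖ + |⟪v, x - y⟫| := by rw [map_sub]
  linarith [h x hx y hy]

lemma antilipschitzWith (h : IsFlat v δ A) (hv : ‖v‖ = 1) (hδ : δ < 1) :
    AntilipschitzWith (1 - δ)⁻¹ (A.domRestrict (projOrth v)) := by
  refine AntilipschitzWith.of_le_mul_dist fun x y => ?_
  have hδ' : 0 < ((1 - δ : ℝ≥0) : ℝ) := by exact_mod_cast tsub_pos_of_lt hδ
  rw [NNReal.coe_inv, inv_mul_eq_div, le_div_iff₀' hδ', NNReal.coe_sub hδ.le, Subtype.dist_eq,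
    dist_eq_norm, dist_eq_norm]
  exact h.mul_norm_sub_le hv x.2 y.2

lemma injOn_projOrth (h : IsFlat v δ A) (hv : ‖v‖ = 1) (hδ : δ < 1) : InjOn (projOrth v) A :=
  injOn_iff_injective.2 (h.antilipschitzWith hv hδ).injective

lemma exists_approximatesLinearOn (h : IsFlat v (δ / 2) A) (hv : ‖v‖ = 1) (hδ : δ ≤ 1) (p : E) :
    ∃ f : (ℝ ∙ v)ᗮ → (ℝ ∙ p)ᗮ,
      ApproximatesLinearOn f (projOrth p ∘L (ℝ ∙ v)ᗮ.subtypeL) (projOrth v '' A) δ ∧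
      f '' (projOrth v '' A) = projOrth p '' A := by
  have : (δ : ℝ) ≤ 1 := hδ
  have half_lt_one : δ / 2 < 1 :=
    (div_lt_one two_pos).2 (hδ.trans_lt one_lt_two)
  have hg : LeftInvOn (invFunOn (projOrth v) A) (projOrth v) A :=
    (h.injOn_projOrth hv half_lt_one).leftInvOn_invFunOn
  refine ⟨projOrth p ∘ invFunOn (projOrth v) A, ?_, ?_⟩
  · rintro _ ⟨x, hx, rfl⟩ _ ⟨y, hy, rfl⟩
    have error : projOrth p x - projOrth p y - projOrth p (projOrth v x - projOrth v y : (ℝ ∙ v)ᗮ) =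
        projOrth p (⟪v, x - y⟫ • v) := by
      rw [← map_sub, ← map_sub, ← map_sub, coe_projOrth_of_norm_eq_one hv, sub_sub_cancel]
    have norm_sub_le : ‖x - y‖ ≤ 2 * ‖projOrth v x - projOrth v y‖ := by
      have := h.mul_norm_sub_le hv hx hy
      push_cast at this
      nlinarith [norm_nonneg (x - y)]
    calc ‖projOrth p (invFunOn (projOrth v) A (projOrth v x)) -
          projOrth p (invFunOn (projOrth v) A (projOrth v y)) -
          projOrth p (projOrth v x - projOrth v y : (ℝ ∙ v)ᗮ)‖
        = ‖projOrth p (⟪v, x - y⟫ • v)‖ := by rw [hg hx, hg hy, error]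
      _ ≤ |⟪v, x - y⟫| := by
        simpa [norm_smul, hv] using (ℝ ∙ p)ᗮ.norm_orthogonalProjectionOnto_apply_le (⟪v, x - y⟫ • v)
      _ ≤ δ / 2 * ‖x - y‖ := by exact_mod_cast h x hx y hy
      _ ≤ δ / 2 * (2 * ‖projOrth v x - projOrth v y‖) := by gcongr
      _ = δ * ‖projOrth v x - projOrth v y‖ := by ring
  · rw [image_image]
    exact image_congr fun x hx => congrArg (projOrth p) (hg hx)

lemma hausdorffMeasure_le [MeasurableSpace E] [BorelSpace E] (h : IsFlat v δ A) (hv : ‖v‖ = 1)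
    (hδ : δ < 1) (d : ℕ) :
    μH[(d : ℝ)] A ≤ ((1 - δ)⁻¹ ^ d : ℝ≥0) * μH[(d : ℝ)] (projOrth v '' A) := by
  have isometry := isometry_subtype_coe.hausdorffMeasure_image (.inl d.cast_nonneg) (univ : Set A)
  have h := (h.antilipschitzWith hv hδ).le_hausdorffMeasure_image d.cast_nonneg univ
  rw [← isometry, image_univ, image_univ, Subtype.range_coe, range_domRestrict,
    ENNReal.rpow_natCast] at h
  exact_mod_cast h

end IsFlat

variable [FiniteDimensional ℝ E] [MeasurableSpace E] [BorelSpace E] {d : ℕ}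
  [Fact (finrank ℝ E = d + 1)] {p v : E} {m : ℝ≥0}

lemma hausdorffMeasure_image_projOrth_lt_top (hp : p ≠ 0) {A : Set E}
    (hA : Bornology.IsBounded A) : μH[(d : ℝ)] (projOrth p '' A) < ∞ := by
  have finrank_p : finrank ℝ (ℝ ∙ p)ᗮ = d := Submodule.finrank_orthogonal_span_singleton hp
  rw [← finrank_p]
  exact ((projOrth p).lipschitz.isBounded_image hA).measure_lt_top

theorem exists_isFlat_imp_hausdorffMeasure_image_projOrth_le (hp : p ≠ 0) (hv : ‖v‖ = 1)
    (hm : |⟪p, v⟫| / ‖p‖ < m) :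
    ∃ δ : ℝ≥0, 0 < δ ∧ ∀ A : Set E, IsFlat v δ A →
      μH[(d : ℝ)] (projOrth p '' A) ≤ m * μH[(d : ℝ)] A := by
  have hv0 : v ≠ 0 := norm_ne_zero_iff.1 (by simp [hv])
  have finrank_p : finrank ℝ (ℝ ∙ p)ᗮ = d := Submodule.finrank_orthogonal_span_singleton hp
  have finrank_v : finrank ℝ (ℝ ∙ v)ᗮ = d := Submodule.finrank_orthogonal_span_singleton hv0
  rw [← normDet_projOrth_comp_subtype hp hv] at hm
  have area := eventually_hausdorffMeasure_image_le_of_normDet_lt finrank_v finrank_p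
    (projOrth p ∘L (ℝ ∙ v)ᗮ.subtypeL) hm
  have small : ∀ᶠ δ : ℝ≥0 in 𝓝[>] 0, δ ≤ 1 :=
    nhdsWithin_le_nhds (Iic_mem_nhds one_pos)
  obtain ⟨δ, ⟨area, hδ1⟩, hδ0⟩ := ((area.and small).and self_mem_nhdsWithin).exists
  refine ⟨δ / 2, half_pos hδ0, fun A hA => ?_⟩
  obtain ⟨f, hf, hfA⟩ := hA.exists_approximatesLinearOn hv hδ1 p
  calc μH[(d : ℝ)] (projOrth p '' A) ≤ m * μH[(d : ℝ)] (projOrth v '' A) := hfA ▸ area _ f hf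
    _ ≤ m * μH[(d : ℝ)] A := by
      gcongr
      exact hausdorffMeasure_orthogonalProjectionOnto_le _ _ _ d.cast_nonneg

theorem exists_isFlat_imp_le_hausdorffMeasure_image_projOrth (hp : p ≠ 0) (hv : ‖v‖ = 1)
    (hm : m < |⟪p, v⟫| / ‖p‖) :
    ∃ δ : ℝ≥0, 0 < δ ∧ ∀ A : Set E, IsFlat v δ A →
      m * μH[(d : ℝ)] A ≤ μH[(d : ℝ)] (projOrth p '' A) := by
  have hv0 : v ≠ 0 := norm_ne_zero_iff.1 (by simp [hv])
  have finrank_p : finrank ℝ (ℝ ∙ p)ᗮ = d := Submodule.finrank_orthogonal_span_singleton hp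
  have finrank_v : finrank ℝ (ℝ ∙ v)ᗮ = d := Submodule.finrank_orthogonal_span_singleton hv0
  rw [← normDet_projOrth_comp_subtype hp hv] at hm
  obtain ⟨m', hmm', hm'⟩ := exists_between
    (show m < ⟨_, LinearMap.normDet_nonneg _⟩ from hm)
  have area := eventually_le_hausdorffMeasure_image_of_lt_normDet finrank_v finrank_p
    (projOrth p ∘L (ℝ ∙ v)ᗮ.subtypeL) hm'
  have small : ∀ᶠ δ : ℝ≥0 in 𝓝[>] 0, δ < 1 := nhdsWithin_le_nhds (Iio_mem_nhds one_pos)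
  have close : ∀ᶠ δ : ℝ≥0 in 𝓝[>] 0, m * (1 - δ)⁻¹ ^ d < m' := by
    have : ContinuousAt (fun δ : ℝ≥0 => m * (1 - δ)⁻¹ ^ d) 0 := by
      refine .mul continuousAt_const (.pow (.inv₀ ?_ (by simp)) d)
      exact (continuous_const.sub continuous_id).continuousAt
    exact nhdsWithin_le_nhds (this.eventually_lt_const (by simpa using hmm'))
  obtain ⟨δ, ⟨area, hδ1, hδm⟩, hδ0⟩ :=
    ((area.and (small.and close)).and self_mem_nhdsWithin).exists
  refine ⟨δ / 2, half_pos hδ0, fun A hA => ?_⟩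
  obtain ⟨f, hf, hfA⟩ := hA.exists_approximatesLinearOn hv hδ1.le p
  calc m * μH[(d : ℝ)] A
      ≤ m * (((1 - δ)⁻¹ ^ d : ℝ≥0) * μH[(d : ℝ)] (projOrth v '' A)) := by
        gcongr
        exact (hA.mono (half_le_self zero_le)).hausdorffMeasure_le hv hδ1 d
    _ = (m * (1 - δ)⁻¹ ^ d : ℝ≥0) * μH[(d : ℝ)] (projOrth v '' A) := by push_cast; ring
    _ ≤ m' * μH[(d : ℝ)] (projOrth v '' A) := by gcongr
    _ ≤ μH[(d : ℝ)] (projOrth p '' A) := hfA ▸ area _ f hf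

lemma exists_isFlat_imp_norm_mul_hausdorffMeasure_image_projOrth_le
    (hp : p ≠ 0) (hv : ‖v‖ = 1)
    {ε : ℝ} (hε : 0 < ε) :
    ∃ δ : ℝ≥0, 0 < δ ∧ ∀ A : Set E, IsFlat v δ A →
      ENNReal.ofReal ‖p‖ * μH[(d : ℝ)] (projOrth p '' A) ≤
        ENNReal.ofReal (|⟪p, v⟫| + ε) * μH[(d : ℝ)] A := by
  have hp' : 0 < ‖p‖ := norm_pos_iff.2 hp
  have hm : |⟪p, v⟫| / ‖p‖ < (((|⟪p, v⟫| + ε) / ‖p‖).toNNReal : ℝ) := by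
    rw [Real.coe_toNNReal _ (by positivity)]
    gcongr
    exact lt_add_of_pos_right _ hε
  obtain ⟨δ, hδ, area⟩ := exists_isFlat_imp_hausdorffMeasure_image_projOrth_le (d := d) hp hv hm
  refine ⟨δ, hδ, fun A hA => ?_⟩
  calc ENNReal.ofReal ‖p‖ * μH[(d : ℝ)] (projOrth p '' A)
      ≤ ENNReal.ofReal ‖p‖ * (ENNReal.ofReal ((|⟪p, v⟫| + ε) / ‖p‖) * μH[(d : ℝ)] A) := by
        gcongr
        exact area A hA
    _ = ENNReal.ofReal (|⟪p, v⟫| + ε) * μH[(d : ℝ)] A := by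
      rw [← mul_assoc, ← ENNReal.ofReal_mul hp'.le, mul_div_cancel₀ _ hp'.ne']

lemma exists_isFlat_imp_le_norm_mul_hausdorffMeasure_image_projOrth
    (hp : p ≠ 0) (hv : ‖v‖ = 1)
    {ε : ℝ} (hε : 0 < ε) :
    ∃ δ : ℝ≥0, 0 < δ ∧ ∀ A : Set E, IsFlat v δ A →
      ENNReal.ofReal (|⟪p, v⟫| - ε) * μH[(d : ℝ)] A ≤
        ENNReal.ofReal ‖p‖ * μH[(d : ℝ)] (projOrth p '' A) := by
  have hp' : 0 < ‖p‖ := norm_pos_iff.2 hp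
  obtain hle | hlt := le_or_gt (|⟪p, v⟫| - ε) 0
  · exact ⟨1, one_pos, fun A _ => by simp [ENNReal.ofReal_of_nonpos hle]⟩
  have hm : (((|⟪p, v⟫| - ε) / ‖p‖).toNNReal : ℝ) < |⟪p, v⟫| / ‖p‖ := by
    rw [Real.coe_toNNReal _ (by positivity)]
    gcongr
    exact sub_lt_self _ hε
  obtain ⟨δ, hδ, area⟩ := exists_isFlat_imp_le_hausdorffMeasure_image_projOrth (d := d) hp hv hm
  refine ⟨δ, hδ, fun A hA => ?_⟩
  calc ENNReal.ofReal (|⟪p, v⟫| - ε) * μH[(d : ℝ)] A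
      = ENNReal.ofReal ‖p‖ * (ENNReal.ofReal ((|⟪p, v⟫| - ε) / ‖p‖) * μH[(d : ℝ)] A) := by
        rw [← mul_assoc, ← ENNReal.ofReal_mul hp'.le, mul_div_cancel₀ _ hp'.ne']
    _ ≤ ENNReal.ofReal ‖p‖ * μH[(d : ℝ)] (projOrth p '' A) := by
        gcongr
        exact area A hA

end Flat

section Localization

variable {X Y : Type*} [TopologicalSpace Y] [SecondCountableTopology Y] [MeasurableSpace X]
  [MeasurableSpace Y] [OpensMeasurableSpace Y]

lemma exists_measurable_partition_of_forall_exists_nhds {N : X → Y} (hN : Measurable N)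
    {A : Set X} (hA : MeasurableSet A) {P : Set X → Prop} (hP₀ : P ∅)
    (hP : ∀ x ∈ A, ∃ U ∈ 𝓝 (N x), ∀ S ⊆ A, MeasurableSet S → MapsTo N S U → P S) :
    ∃ S : ℕ → Set X, (∀ k, MeasurableSet (S k)) ∧ Pairwise (Disjoint on S) ∧ ⋃ k, S k = A ∧
      ∀ k, P (S k) := by
  obtain rfl | ⟨x₀, hx₀⟩ := A.eq_empty_or_nonempty
  · exact ⟨fun _ => ∅, by simp, fun _ _ _ => disjoint_bot_left, iUnion_empty, fun _ => hP₀⟩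
  have hP' : ∀ y ∈ N '' A, ∃ U ∈ 𝓝 y, ∀ S ⊆ A, MeasurableSet S → MapsTo N S U → P S :=
    forall_mem_image.2 hP
  choose! U hU hPU using hP'
  obtain ⟨t, htA, ht, cover⟩ := TopologicalSpace.countable_cover_nhdsWithin
    (f := fun y => interior (U y)) fun y hy =>
      mem_nhdsWithin_of_mem_nhds (interior_mem_nhds.2 (hU y hy))
  have t_nonempty : t.Nonempty := by
    obtain ⟨y, hy, -⟩ := mem_iUnion₂.1 (cover (mem_image_of_mem N hx₀))
    exact ⟨y, hy⟩
  obtain ⟨y, rfl⟩ := ht.exists_eq_range t_nonempty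
  let T k := A ∩ N ⁻¹' interior (U (y k))
  have hT k : MeasurableSet (T k) := hA.inter (hN isOpen_interior.measurableSet)
  have iUnion_T : ⋃ k, T k = A := by
    refine Subset.antisymm (iUnion_subset fun k => inter_subset_left) fun x hx => ?_
    obtain ⟨_, ⟨k, rfl⟩, hk⟩ := mem_iUnion₂.1 (cover (mem_image_of_mem N hx))
    exact mem_iUnion.2 ⟨k, hx, hk⟩
  refine ⟨disjointed T, .disjointed hT, disjoint_disjointed T, by rw [iUnion_disjointed, iUnion_T],
    fun k => ?_⟩
  have hk : disjointed T k ⊆ T k := disjointed_subset T k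
  exact hPU _ (htA ⟨k, rfl⟩) _ (hk.trans inter_subset_left) (.disjointed hT k)
    fun x hx => interior_subset (hk hx).2

lemma ennreal_le_of_forall_pos_le_add_mul {a b c : ℝ≥0∞} (hc : c ≠ ∞)
    (h : ∀ ε : ℝ≥0, 0 < ε → a ≤ b + ε * c) : a ≤ b := by
  have lim : Tendsto (fun ε : ℝ≥0 => b + ε * c) (𝓝 0) (𝓝 (b + (0 : ℝ≥0) * c)) :=
    (ENNReal.Tendsto.mul_const (ENNReal.tendsto_coe.2 tendsto_id) (.inr hc)).const_add _
  rw [ENNReal.coe_zero, zero_mul, add_zero] at lim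
  exact ge_of_tendsto (lim.mono_left (nhdsWithin_le_nhds (s := Ioi 0)))
    (eventually_mem_nhdsWithin.mono h)

theorem le_of_forall_exists_nhds_le_add_mul {μ : Measure X} {A : Set X} (hA : MeasurableSet A)
    (hμA : μ A ≠ ∞) {N : X → Y} (hN : Measurable N) {F G : Set X → ℝ≥0∞} (hF₀ : F ∅ = 0)
    (hF : ∀ S : ℕ → Set X, F (⋃ k, S k) ≤ ∑' k, F (S k))
    (hG : ∀ S : ℕ → Set X, (∀ k, MeasurableSet (S k)) → Pairwise (Disjoint on S) →
      ⋃ k, S k = A → ∑' k, G (S k) ≤ G A)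
    (hFG : ∀ x ∈ A, ∀ ε : ℝ≥0, 0 < ε → ∃ U ∈ 𝓝 (N x), ∀ S ⊆ A, MeasurableSet S →
      MapsTo N S U → F S ≤ G S + ε * μ S) :
    F A ≤ G A := by
  refine ennreal_le_of_forall_pos_le_add_mul hμA fun ε hε => ?_
  obtain ⟨S, hS, disj, rfl, hFGS⟩ := exists_measurable_partition_of_forall_exists_nhds hN hA
    (P := fun S => F S ≤ G S + ε * μ S) (by simp [hF₀]) fun x hx => hFG x hx ε hε
  calc F (⋃ k, S k) ≤ ∑' k, F (S k) := hF S
    _ ≤ ∑' k, (G (S k) + ε * μ (S k)) := ENNReal.tsum_le_tsum hFGS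
    _ = ∑' k, G (S k) + ε * μ (⋃ k, S k) := by
      rw [ENNReal.tsum_add, ENNReal.tsum_mul_left, measure_iUnion disj hS]
    _ ≤ G (⋃ k, S k) + ε * μ (⋃ k, S k) := by gcongr; exact hG S hS disj rfl

end Localization

section InnerNormal

variable {n : ℕ} {K : Set (EuclideanSpace ℝ (Fin n))} {x v : EuclideanSpace ℝ (Fin n)}

lemma IsInnerNormalAt.mem_frontier (h : IsInnerNormalAt K x v) (hx : x ∈ K) : x ∈ frontier K := by
  refine ⟨subset_closure hx, fun hxi => ?_⟩
  have lim : Tendsto (fun t : ℝ => x - t • v) (𝓝[>] 0) (𝓝 x) := by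
    have : Continuous fun t : ℝ => x - t • v := by fun_prop
    exact (this.tendsto' 0 x (by simp)).mono_left nhdsWithin_le_nhds
  obtain ⟨t, htK, ht⟩ :=
    ((lim.eventually (mem_interior_iff_mem_nhds.1 hxi)).and self_mem_nhdsWithin).exists
  have : 0 ≤ ⟪v, x - t • v - x⟫ := h.2 _ htK
  rw [sub_right_comm, sub_self, zero_sub, inner_neg_right, inner_smul_right,
    real_inner_self_eq_norm_sq, h.1, one_pow, mul_one] at this
  exact (neg_nonneg.1 this).not_gt ht

lemma isClosed_setOf_isInnerNormalAt (K : Set (EuclideanSpace ℝ (Fin n))) :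
    IsClosed {q : EuclideanSpace ℝ (Fin n) × EuclideanSpace ℝ (Fin n) |
      IsInnerNormalAt K q.1 q.2} := by
  simp only [IsInnerNormalAt, ofPred_and, ofPred_forall]
  refine (isClosed_eq continuous_snd.norm continuous_const).inter
    (isClosed_biInter fun y _ => isClosed_le continuous_const ?_)
  exact continuous_snd.inner (continuous_const.sub continuous_fst)

lemma isFlat_of_forall_exists_isInnerNormalAt {A : Set (EuclideanSpace ℝ (Fin n))} {δ : ℝ≥0}
    (hA : A ⊆ K) (h : ∀ x ∈ A, ∃ w ∈ closedBall v δ, IsInnerNormalAt K x w) : IsFlat v δ A := by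
  have lower : ∀ x ∈ A, ∀ y ∈ A, -(δ * ‖x - y‖) ≤ ⟪v, x - y⟫ := fun x hx y hy => by
    obtain ⟨w, hwv, hw⟩ := h y hy
    have error : ⟪w - v, x - y⟫ ≤ δ * ‖x - y‖ :=
      (real_inner_le_norm _ _).trans (by gcongr; exact mem_closedBall_iff_norm.1 hwv)
    rw [inner_sub_left] at error
    linarith [hw.2 x (hA hx)]
  refine fun x hx y hy => abs_le.2 ⟨lower x hx y hy, ?_⟩
  have := lower y hy x hx
  rw [norm_sub_rev, ← neg_sub x y, inner_neg_right] at this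
  linarith

/-- The points of `K` with exactly one inner unit normal: for a convex body, the differentiability
points of the boundary. -/
def regularBoundary (K : Set (EuclideanSpace ℝ (Fin n))) : Set (EuclideanSpace ℝ (Fin n)) :=
  {x ∈ K | ∃! v, IsInnerNormalAt K x v}

open Classical in
/-- The inner unit normal of `K` on `regularBoundary K`, extended by `0`. -/
noncomputable def innerNormal (K : Set (EuclideanSpace ℝ (Fin n))) (x : EuclideanSpace ℝ (Fin n)) :
    EuclideanSpace ℝ (Fin n) :=
  if h : x ∈ regularBoundary K then h.2.choose else 0

lemma regularBoundary_subset : regularBoundary K ⊆ K := sep_subset _ _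

lemma isInnerNormalAt_innerNormal (hx : x ∈ regularBoundary K) :
    IsInnerNormalAt K x (innerNormal K x) := by
  rw [innerNormal, dif_pos hx]
  exact hx.2.choose_spec.1

lemma IsInnerNormalAt.eq_innerNormal (h : IsInnerNormalAt K x v) (hx : x ∈ regularBoundary K) :
    v = innerNormal K x :=
  hx.2.unique h (isInnerNormalAt_innerNormal hx)

lemma norm_innerNormal (hx : x ∈ regularBoundary K) : ‖innerNormal K x‖ = 1 :=
  (isInnerNormalAt_innerNormal hx).1

lemma regularBoundary_subset_frontier : regularBoundary K ⊆ frontier K := fun _ hx =>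
  (isInnerNormalAt_innerNormal hx).mem_frontier hx.1

lemma continuousOn_innerNormal (K : Set (EuclideanSpace ℝ (Fin n))) :
    ContinuousOn (innerNormal K) (regularBoundary K) := by
  intro x hx
  refine (isCompact_sphere 0 1).le_nhds_of_unique_clusterPt (l := map _ _) ?_ fun v _ hv => ?_
  · refine mem_map.2 ?_
    filter_upwards [self_mem_nhdsWithin] with y hy
    simpa using norm_innerNormal hy
  · obtain ⟨F, hF, hFv⟩ := mapClusterPt_iff_ultrafilter.1 hv
    have limit : Tendsto (fun y => (y, innerNormal K y)) F (𝓝 (x, v)) :=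
      (tendsto_id.mono_left (hF.trans nhdsWithin_le_nhds)).prodMk_nhds hFv
    have normal : ∀ᶠ y in F, IsInnerNormalAt K y (innerNormal K y) :=
      hF (eventually_mem_nhdsWithin.mono fun y => isInnerNormalAt_innerNormal)
    have hxv : (x, v) ∈ {q : EuclideanSpace ℝ (Fin n) × EuclideanSpace ℝ (Fin n) |
        IsInnerNormalAt K q.1 q.2} :=
      (isClosed_setOf_isInnerNormalAt K).mem_of_tendsto limit normal
    exact IsInnerNormalAt.eq_innerNormal hxv hx

lemma measurableSet_regularBoundary (hK : IsCompact K) : MeasurableSet (regularBoundary K) := by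
  have compact_normals : IsCompact (K ×ˢ sphere (0 : EuclideanSpace ℝ (Fin n)) 1 ∩
      {q | IsInnerNormalAt K q.1 q.2}) :=
    (hK.prod (isCompact_sphere 0 1)).inter_right (isClosed_setOf_isInnerNormalAt K)
  set N := K ×ˢ sphere (0 : EuclideanSpace ℝ (Fin n)) 1 ∩ {q | IsInnerNormalAt K q.1 q.2}
  have mem_N {x v} : (x, v) ∈ N ↔ x ∈ K ∧ IsInnerNormalAt K x v := by
    simp only [N, IsInnerNormalAt, mem_inter_iff, mem_prod, mem_sphere_zero_iff_norm, mem_ofPred_eq]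
    tauto
  let T (k : ℕ) := (N ×ˢ N) ∩ {q | q.1.1 = q.2.1 ∧ (1 : ℝ) / (k + 1) ≤ ‖q.1.2 - q.2.2‖}
  have compact_T k : IsCompact (T k) :=
    (compact_normals.prod compact_normals).inter_right <|
      (isClosed_eq (continuous_fst.comp continuous_fst) (continuous_fst.comp continuous_snd)).inter
        <| isClosed_le continuous_const <|
          ((continuous_snd.comp continuous_fst).sub (continuous_snd.comp continuous_snd)).norm
  have regular_eq : regularBoundary K = Prod.fst '' N \ ⋃ k, (fun q => q.1.1) '' T k := by
    ext x
    constructor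
    · rintro ⟨hxK, v, hv, hv_unique⟩
      refine ⟨⟨(x, v), mem_N.2 ⟨hxK, hv⟩, rfl⟩, fun hx => ?_⟩
      obtain ⟨k, ⟨⟨y, w⟩, ⟨y', w'⟩⟩, ⟨⟨hw, hw'⟩, hyy', hk⟩, rfl⟩ := mem_iUnion.1 hx
      obtain rfl : y = y' := hyy'
      obtain rfl : w = w' :=
        (hv_unique w (mem_N.1 hw).2).trans (hv_unique w' (mem_N.1 hw').2).symm
      rw [sub_self, norm_zero] at hk
      exact hk.not_gt Nat.one_div_pos_of_nat
    · rintro ⟨⟨⟨x, v⟩, hv, rfl⟩, hx⟩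
      refine ⟨(mem_N.1 hv).1, v, (mem_N.1 hv).2, fun w hw => ?_⟩
      by_contra hne
      obtain ⟨k, hk⟩ := exists_nat_one_div_lt (norm_pos_iff.2 (sub_ne_zero.2 hne))
      exact hx (mem_iUnion.2 ⟨k, ((x, w), (x, v)),
        ⟨⟨mem_N.2 ⟨(mem_N.1 hv).1, hw⟩, hv⟩, rfl, hk.le⟩, rfl⟩)
  rw [regular_eq]
  exact (compact_normals.image continuous_fst).measurableSet.diff
    (.iUnion fun k => ((compact_T k).image (by fun_prop)).measurableSet)

lemma measurable_innerNormal (hK : IsCompact K) : Measurable (innerNormal K) := by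
  classical
  have := (continuousOn_innerNormal K).measurable_piecewise (g := 0) continuousOn_const
    (measurableSet_regularBoundary hK)
  convert this using 1
  ext1 x
  by_cases hx : x ∈ regularBoundary K <;> simp [hx, innerNormal]

lemma isFlat_of_innerNormal_mem_closedBall {A : Set (EuclideanSpace ℝ (Fin n))} {δ : ℝ≥0}
    (hA : A ⊆ regularBoundary K) (h : MapsTo (innerNormal K) A (closedBall v δ)) : IsFlat v δ A :=
  isFlat_of_forall_exists_isInnerNormalAt (hA.trans regularBoundary_subset) fun _ hx =>
    ⟨_, h hx, isInnerNormalAt_innerNormal (hA hx)⟩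

end InnerNormal

section BoundaryMeasure

variable {d : ℕ} {K : Set (EuclideanSpace ℝ (Fin (d + 1)))}

lemma hausdorffMeasure_exists_isInnerNormalAt_lt_top (hK : Bornology.IsBounded K) :
    μH[(d : ℝ)] {x ∈ K | ∃ v, IsInnerNormalAt K x v} < ∞ := by
  have flat : ∀ v ∈ sphere (0 : EuclideanSpace ℝ (Fin (d + 1))) 1, ∃ δ : ℝ≥0, 0 < δ ∧
      ∀ A, IsFlat v δ A → (1 / 2 : ℝ≥0) * μH[(d : ℝ)] A ≤ μH[(d : ℝ)] (projOrth v '' A) := by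
    intro v hv
    have hv : ‖v‖ = 1 := mem_sphere_zero_iff_norm.1 hv
    refine exists_isFlat_imp_le_hausdorffMeasure_image_projOrth (norm_ne_zero_iff.1 (by simp [hv]))
      hv ?_
    norm_num [hv]
  choose! δ hδ₀ hδ using flat
  obtain ⟨t, ht, cover⟩ := (isCompact_sphere (0 : EuclideanSpace ℝ (Fin (d + 1))) 1)
    |>.elim_nhds_subcover (fun v => closedBall v (δ v)) fun v hv => closedBall_mem_nhds v (hδ₀ v hv)
  let S v := {x ∈ K | ∃ w ∈ closedBall v (δ v), IsInnerNormalAt K x w}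
  have subset_biUnion : {x ∈ K | ∃ v, IsInnerNormalAt K x v} ⊆ ⋃ v ∈ t, S v := by
    rintro x ⟨hx, w, hw⟩
    obtain ⟨v, hv, hwv⟩ := mem_iUnion₂.1 (cover (mem_sphere_zero_iff_norm.2 hw.1))
    exact mem_iUnion₂.2 ⟨v, hv, hx, w, hwv, hw⟩
  refine (measure_mono subset_biUnion).trans_lt <|
    measure_biUnion_lt_top t.finite_toSet fun v hv => ?_
  have hSK : S v ⊆ K := sep_subset _ _
  have half_mul_lt_top : (1 / 2 : ℝ≥0) * μH[(d : ℝ)] (S v) < ∞ :=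
    (hδ v (ht v hv) _ (isFlat_of_forall_exists_isInnerNormalAt hSK fun x hx => hx.2)).trans_lt
      (hausdorffMeasure_image_projOrth_lt_top (ne_of_mem_sphere (ht v hv) one_ne_zero)
        (hK.subset hSK))
  exact ENNReal.lt_top_of_mul_ne_top_right half_mul_lt_top.ne (by simp)

lemma hausdorffMeasure_regularBoundary_lt_top (hK : Bornology.IsBounded K) :
    μH[(d : ℝ)] (regularBoundary K) < ∞ := by
  have subset : regularBoundary K ⊆ {x ∈ K | ∃ v, IsInnerNormalAt K x v} :=
    fun _ hx => ⟨hx.1, hx.2.exists⟩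
  exact measure_lt_top_of_subset subset (hausdorffMeasure_exists_isInnerNormalAt_lt_top hK).ne

lemma exists_hausdorffMeasure_normals_mem_closedBall_eq_zero (hK : Bornology.IsBounded K)
    {v w : EuclideanSpace ℝ (Fin (d + 1))} (hv : ‖v‖ = 1) (hw : ‖w‖ = 1) (hvw : v ≠ w)
    (hvw' : v ≠ -w) :
    ∃ δ : ℝ≥0, 0 < δ ∧ μH[(d : ℝ)] {x ∈ K | ∃ v' ∈ closedBall v δ, ∃ w' ∈ closedBall w δ,
      IsInnerNormalAt K x v' ∧ IsInnerNormalAt K x w'} = 0 := by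
  have hv₀ : v ≠ 0 := norm_ne_zero_iff.1 (by simp [hv])
  have inner_lt : |(⟪v, w⟫ : ℝ)| < 1 := by
    refine lt_of_le_of_ne (by simpa [hv, hw] using abs_real_inner_le_norm v w) fun h => ?_
    rcases eq_or_eq_neg_of_abs_eq h with h | h
    · exact hvw ((inner_eq_one_iff_of_norm_eq_one hv hw).1 h)
    · refine hvw' ((inner_eq_one_iff_of_norm_eq_one (𝕜 := ℝ) hv (by rwa [norm_neg])).1 ?_)
      rw [inner_neg_right, h, neg_neg]
  -- Projection along `v` has Jacobian close to `1` where the normal is near `v`, and close to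
  -- `|⟪v, w⟫| < 1` where it is near `w`.
  obtain ⟨m, hvwm, hm⟩ := exists_between inner_lt
  obtain ⟨m', hmm', hm'⟩ := exists_between hm
  lift m to ℝ≥0 using (abs_nonneg _).trans hvwm.le
  lift m' to ℝ≥0 using m.2.trans hmm'.le
  obtain ⟨δ₁, hδ₁, lower⟩ := exists_isFlat_imp_le_hausdorffMeasure_image_projOrth (d := d)
    (m := m') hv₀ hv (by simpa [hv] using hm')
  obtain ⟨δ₂, hδ₂, upper⟩ := exists_isFlat_imp_hausdorffMeasure_image_projOrth_le (d := d)
    (m := m) hv₀ hw (by simpa [hv] using hvwm)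
  refine ⟨min δ₁ δ₂, lt_min hδ₁ hδ₂, ?_⟩
  set A := {x ∈ K | ∃ v' ∈ closedBall v (min δ₁ δ₂ : ℝ≥0), ∃ w' ∈ closedBall w (min δ₁ δ₂ : ℝ≥0),
    IsInnerNormalAt K x v' ∧ IsInnerNormalAt K x w'}
  have hAK : A ⊆ K := sep_subset _ _
  have flat_v : IsFlat v (min δ₁ δ₂) A := isFlat_of_forall_exists_isInnerNormalAt hAK
    fun x ⟨_, v', hv', _, _, hxv', _⟩ => ⟨v', hv', hxv'⟩
  have flat_w : IsFlat w (min δ₁ δ₂) A := isFlat_of_forall_exists_isInnerNormalAt hAK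
    fun x ⟨_, _, _, w', hw', _, hxw'⟩ => ⟨w', hw', hxw'⟩
  have m'_mul_le : m' * μH[(d : ℝ)] A ≤ m * μH[(d : ℝ)] A :=
    (lower A (flat_v.mono (min_le_left _ _))).trans (upper A (flat_w.mono (min_le_right _ _)))
  have hA : A ⊆ {x ∈ K | ∃ v, IsInnerNormalAt K x v} :=
    fun x ⟨hx, v', _, _, _, hxv', _⟩ => ⟨hx, v', hxv'⟩
  have finite : μH[(d : ℝ)] A ≠ ∞ :=
    measure_ne_top_of_subset hA (hausdorffMeasure_exists_isInnerNormalAt_lt_top hK).ne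
  by_contra h₀
  have hm'm : m' ≤ m := ENNReal.coe_le_coe.1 ((ENNReal.mul_le_mul_iff_left h₀ finite).1 m'_mul_le)
  exact hmm'.not_ge hm'm

lemma IsInnerNormalAt.ne_neg {n : ℕ} {K : Set (EuclideanSpace ℝ (Fin n))}
    {x v w : EuclideanSpace ℝ (Fin n)} (hspan : vectorSpan ℝ K = ⊤) (hx : x ∈ K)
    (hv : IsInnerNormalAt K x v) (hw : IsInnerNormalAt K x w) : v ≠ -w := by
  rintro rfl
  have span_le : vectorSpan ℝ K ≤ (ℝ ∙ w)ᗮ := by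
    rw [vectorSpan_eq_span_vsub_set_right ℝ hx, Submodule.span_le]
    rintro _ ⟨y, hy, rfl⟩
    refine Submodule.mem_orthogonal_singleton_iff_inner_right.2 (le_antisymm ?_ (hw.2 y hy))
    simpa [inner_neg_left] using hv.2 y hy
  have hww : w ∈ (ℝ ∙ w)ᗮ := span_le (hspan ▸ Submodule.mem_top)
  rw [Submodule.mem_orthogonal_singleton_iff_inner_right, real_inner_self_eq_norm_sq, hw.1] at hww
  norm_num at hww

theorem hausdorffMeasure_exists_isInnerNormalAt_ne_eq_zero (hK : Bornology.IsBounded K)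
    (hspan : vectorSpan ℝ K = ⊤) :
    μH[(d : ℝ)] {x ∈ K | ∃ v w, IsInnerNormalAt K x v ∧ IsInnerNormalAt K x w ∧ v ≠ w} = 0 := by
  let s : Set (EuclideanSpace ℝ (Fin (d + 1)) × EuclideanSpace ℝ (Fin (d + 1))) :=
    {q | ‖q.1‖ = 1 ∧ ‖q.2‖ = 1 ∧ q.1 ≠ q.2 ∧ q.1 ≠ -q.2}
  have null : ∀ q ∈ s, ∃ δ : ℝ≥0, 0 < δ ∧ μH[(d : ℝ)] {x ∈ K | ∃ v ∈ closedBall q.1 δ,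
      ∃ w ∈ closedBall q.2 δ, IsInnerNormalAt K x v ∧ IsInnerNormalAt K x w} = 0 :=
    fun q ⟨h₁, h₂, hne, hne'⟩ =>
      exists_hausdorffMeasure_normals_mem_closedBall_eq_zero hK h₁ h₂ hne hne'
  choose! δ hδ null using null
  obtain ⟨t, hts, ht, cover⟩ := TopologicalSpace.countable_cover_nhdsWithin (s := s)
    (f := fun q => closedBall q (δ q)) fun q hq =>
      mem_nhdsWithin_of_mem_nhds (closedBall_mem_nhds q (hδ q hq))
  refine measure_mono_null ?_ ((measure_biUnion_null_iff ht).2 fun q hq => null q (hts hq))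
  rintro x ⟨hx, v, w, hv, hw, hvw⟩
  obtain ⟨q, hq, hqvw⟩ := mem_iUnion₂.1
    (cover (show (v, w) ∈ s from ⟨hv.1, hw.1, hvw, hv.ne_neg hspan hx hw⟩))
  rw [← closedBall_prod_same] at hqvw
  exact mem_iUnion₂.2 ⟨q, hq, hx, v, hqvw.1, w, hqvw.2, hv, hw⟩

theorem ae_mem_regularBoundary_and_eq_innerNormal (hK : IsCompact K) (hspan : vectorSpan ℝ K = ⊤)
    {ν : EuclideanSpace ℝ (Fin (d + 1)) → EuclideanSpace ℝ (Fin (d + 1))}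
    (hν : ∀ᵐ x ∂μH[(d : ℝ)].restrict (frontier K), IsInnerNormalAt K x (ν x)) :
    ∀ᵐ x ∂μH[(d : ℝ)].restrict (frontier K), x ∈ regularBoundary K ∧ ν x = innerNormal K x := by
  have unique : ∀ᵐ x ∂μH[(d : ℝ)].restrict (frontier K),
      ¬ (x ∈ K ∧ ∃ v w, IsInnerNormalAt K x v ∧ IsInnerNormalAt K x w ∧ v ≠ w) :=
    ae_restrict_of_ae (measure_eq_zero_iff_ae_notMem.1
      (hausdorffMeasure_exists_isInnerNormalAt_ne_eq_zero hK.isBounded hspan))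
  filter_upwards [hν, unique, ae_restrict_mem isClosed_frontier.measurableSet] with x hx hxu hxK
  have hxK : x ∈ K := hK.isClosed.frontier_subset hxK
  have hx_reg : x ∈ regularBoundary K :=
    ⟨hxK, ν x, hx, fun w hw => by_contra fun hne => hxu ⟨hxK, w, ν x, hw, hx, hne⟩⟩
  exact ⟨hx_reg, hx.eq_innerNormal hx_reg⟩

theorem setLIntegral_frontier_inter_eq_setLIntegral_regularBoundary_inter (hK : IsCompact K)
    (hspan : vectorSpan ℝ K = ⊤)
    {ν : EuclideanSpace ℝ (Fin (d + 1)) → EuclideanSpace ℝ (Fin (d + 1))}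
    (hν : ∀ᵐ x ∂μH[(d : ℝ)].restrict (frontier K), IsInnerNormalAt K x (ν x))
    {S : Set (EuclideanSpace ℝ (Fin (d + 1)))} (hS : MeasurableSet S)
    (f : EuclideanSpace ℝ (Fin (d + 1)) → ℝ≥0∞) :
    ∫⁻ x in frontier K ∩ S, f (ν x) ∂μH[(d : ℝ)] =
      ∫⁻ x in regularBoundary K ∩ S, f (innerNormal K x) ∂μH[(d : ℝ)] := by
  have ae_reg := ae_mem_regularBoundary_and_eq_innerNormal hK hspan hν
  have ae_eq : (frontier K ∩ S : Set _) =ᵐ[μH[(d : ℝ)]] (regularBoundary K ∩ S : Set _) := by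
    filter_upwards [(ae_restrict_iff' isClosed_frontier.measurableSet).1 ae_reg] with x hx
    exact propext ⟨fun h => ⟨(hx h.1).1, h.2⟩, fun h => ⟨regularBoundary_subset_frontier h.1, h.2⟩⟩
  rw [setLIntegral_congr ae_eq]
  refine setLIntegral_congr_fun_ae ((measurableSet_regularBoundary hK).inter hS) ?_
  filter_upwards [(ae_restrict_iff' isClosed_frontier.measurableSet).1 ae_reg] with x hx hxS
  rw [(hx (regularBoundary_subset_frontier hxS.1)).2]

end BoundaryMeasure

section Area

variable {d : ℕ} {K A : Set (EuclideanSpace ℝ (Fin (d + 1)))} {p : EuclideanSpace ℝ (Fin (d + 1))}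

theorem norm_mul_hausdorffMeasure_image_projOrth_le (hK : IsCompact K) (hA : MeasurableSet A)
    (hAK : A ⊆ regularBoundary K) (p : EuclideanSpace ℝ (Fin (d + 1))) :
    ENNReal.ofReal ‖p‖ * μH[(d : ℝ)] (projOrth p '' A) ≤
      ∫⁻ x in A, ENNReal.ofReal |⟪p, innerNormal K x⟫| ∂μH[(d : ℝ)] := by
  obtain rfl | hp := eq_or_ne p 0
  · simp
  refine le_of_forall_exists_nhds_le_add_mul
    (F := fun S => ENNReal.ofReal ‖p‖ * μH[(d : ℝ)] (projOrth p '' S))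
    (G := fun S => ∫⁻ x in S, ENNReal.ofReal |⟪p, innerNormal K x⟫| ∂μH[(d : ℝ)])
    hA (measure_ne_top_of_subset hAK (hausdorffMeasure_regularBoundary_lt_top hK.isBounded).ne)
    (measurable_innerNormal hK) (by simp) (fun S => ?_) (fun S hS disj hSA => ?_)
    fun x hx ε hε => ?_
  · rw [image_iUnion, ENNReal.tsum_mul_left]
    gcongr
    exact measure_iUnion_le _
  · rw [← hSA, lintegral_iUnion hS disj]
  · have hε' : (0 : ℝ) < ε / 2 := half_pos hε
    obtain ⟨δ, hδ, area⟩ := exists_isFlat_imp_norm_mul_hausdorffMeasure_image_projOrth_le (d := d)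
      hp (norm_innerNormal (hAK hx)) hε'
    have close : ∀ᶠ v in 𝓝 (innerNormal K x), |⟪p, innerNormal K x⟫| - ε / 2 < |⟪p, v⟫| :=
      (continuous_const.inner continuous_id).abs.continuousAt.eventually_const_lt
        (sub_lt_self _ hε')
    refine ⟨_, inter_mem (closedBall_mem_nhds _ hδ) close, fun S hSA hS hSU => ?_⟩
    calc ENNReal.ofReal ‖p‖ * μH[(d : ℝ)] (projOrth p '' S)
        ≤ ENNReal.ofReal (|⟪p, innerNormal K x⟫| + ε / 2) * μH[(d : ℝ)] S :=
          area S (isFlat_of_innerNormal_mem_closedBall (hSA.trans hAK) fun y hy => (hSU hy).1)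
      _ = ∫⁻ _ in S, ENNReal.ofReal (|⟪p, innerNormal K x⟫| + ε / 2) ∂μH[(d : ℝ)] :=
          (setLIntegral_const _ _).symm
      _ ≤ ∫⁻ y in S, (ENNReal.ofReal |⟪p, innerNormal K y⟫| + ε) ∂μH[(d : ℝ)] := by
          refine setLIntegral_mono' hS fun y hy => ?_
          rw [← ENNReal.ofReal_coe_nnreal, ← ENNReal.ofReal_add (abs_nonneg _) ε.coe_nonneg]
          have := (hSU hy).2
          exact ENNReal.ofReal_le_ofReal (by linarith [mem_ofPred.1 this])
      _ = ∫⁻ y in S, ENNReal.ofReal |⟪p, innerNormal K y⟫| ∂μH[(d : ℝ)] + ε * μH[(d : ℝ)] S := by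
          rw [lintegral_add_right _ measurable_const, setLIntegral_const]

theorem setLIntegral_inner_innerNormal_le (hK : IsCompact K) (hA : MeasurableSet A)
    (hAK : A ⊆ regularBoundary K) (hinj : InjOn (projOrth p) A) :
    ∫⁻ x in A, ENNReal.ofReal ⟪p, innerNormal K x⟫ ∂μH[(d : ℝ)] ≤
      ENNReal.ofReal ‖p‖ * μH[(d : ℝ)] (projOrth p '' A) := by
  obtain rfl | hp := eq_or_ne p 0
  · simp
  refine le_of_forall_exists_nhds_le_add_mul
    (F := fun S => ∫⁻ x in S, ENNReal.ofReal ⟪p, innerNormal K x⟫ ∂μH[(d : ℝ)])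
    (G := fun S => ENNReal.ofReal ‖p‖ * μH[(d : ℝ)] (projOrth p '' S))
    hA (measure_ne_top_of_subset hAK (hausdorffMeasure_regularBoundary_lt_top hK.isBounded).ne)
    (measurable_innerNormal hK) (by simp) (fun S => lintegral_iUnion_le S _)
    (fun S hS disj hSA => ?_) fun x hx ε hε => ?_
  · have hSk k : S k ⊆ A := hSA ▸ subset_iUnion S k
    rw [ENNReal.tsum_mul_left, ← hSA, image_iUnion, measure_iUnion]
    · exact fun i j hij => disjoint_image_image fun x hx y hy hxy =>
        (disj hij).ne_of_mem hx hy (hinj (hSk i hx) (hSk j hy) hxy)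
    · exact fun k => (hS k).image_of_continuousOn_injOn (projOrth p).continuous.continuousOn
        (hinj.mono (hSk k))
  · have hε' : (0 : ℝ) < ε / 2 := half_pos hε
    obtain ⟨δ, hδ, area⟩ := exists_isFlat_imp_le_norm_mul_hausdorffMeasure_image_projOrth (d := d)
      hp (norm_innerNormal (hAK hx)) hε'
    have close : ∀ᶠ v in 𝓝 (innerNormal K x), ⟪p, v⟫ < ⟪p, innerNormal K x⟫ + ε / 2 :=
      (continuous_const.inner continuous_id).continuousAt.eventually_lt_const
        (lt_add_of_pos_right _ hε')
    refine ⟨_, inter_mem (closedBall_mem_nhds _ hδ) close, fun S hSA hS hSU => ?_⟩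
    calc ∫⁻ y in S, ENNReal.ofReal ⟪p, innerNormal K y⟫ ∂μH[(d : ℝ)]
        ≤ ∫⁻ _ in S, (ENNReal.ofReal (|⟪p, innerNormal K x⟫| - ε / 2) + ε) ∂μH[(d : ℝ)] := by
          refine setLIntegral_mono' hS fun y hy => ?_
          rw [← ENNReal.ofReal_coe_nnreal]
          refine (ENNReal.ofReal_le_ofReal ?_).trans ENNReal.ofReal_add_le
          have := (hSU hy).2
          linarith [mem_ofPred.1 this, le_abs_self ⟪p, innerNormal K x⟫]
      _ = ENNReal.ofReal (|⟪p, innerNormal K x⟫| - ε / 2) * μH[(d : ℝ)] S +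
            ε * μH[(d : ℝ)] S := by rw [setLIntegral_const, add_mul]
      _ ≤ ENNReal.ofReal ‖p‖ * μH[(d : ℝ)] (projOrth p '' S) + ε * μH[(d : ℝ)] S := by
          refine add_le_add_left (area S ?_) _
          exact isFlat_of_innerNormal_mem_closedBall (hSA.trans hAK) fun y hy => (hSU hy).1

end Area

section LinearMinorants

variable {E : Type*} [NormedAddCommGroup E] [InnerProductSpace ℝ E] [FiniteDimensional ℝ E]
  {Φ : E → ℝ}

theorem exists_inner_le_and_inner_eq (hom : ∀ l : ℝ, 0 < l → ∀ x, Φ (l • x) = l * Φ x)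
    (convex : ConvexOn ℝ univ Φ) {v : E} (hv : v ≠ 0) :
    ∃ p : E, (∀ x, ⟪p, x⟫ ≤ Φ x) ∧ ⟪p, v⟫ = Φ v := by
  have subadd (x y : E) : Φ (x + y) ≤ Φ x + Φ y := by
    have half : (0 : ℝ) < 1 / 2 := by norm_num
    have := convex.2 (mem_univ x) (mem_univ y) half.le half.le (by norm_num)
    rw [← smul_add, hom _ half, smul_eq_mul, smul_eq_mul] at this
    linarith
  have zero : Φ 0 = 0 := by
    have := hom 2 two_pos 0
    rw [smul_zero] at this
    linarith
  have le_on_span (t : ℝ) : t * Φ v ≤ Φ (t • v) := by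
    obtain ht | rfl | ht := lt_trichotomy t 0
    · have := subadd (t • v) (-t • v)
      rw [← add_smul, add_neg_cancel, zero_smul, zero, hom (-t) (neg_pos.2 ht)] at this
      linarith
    · simp [zero]
    · exact (hom t ht v).ge
  obtain ⟨g, g_eq, g_le⟩ := exists_extension_of_le_sublinear
    (LinearPMap.mkSpanSingleton v (Φ v) hv) Φ hom subadd fun ⟨x, hx⟩ => by
      obtain ⟨t, rfl⟩ := Submodule.mem_span_singleton.1 hx
      rw [LinearPMap.mkSpanSingleton'_apply]
      exact le_on_span t
  refine ⟨(InnerProductSpace.toDual ℝ E).symm (LinearMap.toContinuousLinearMap g), fun x => ?_, ?_⟩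
  · rw [InnerProductSpace.toDual_symm_apply]
    exact g_le x
  · rw [InnerProductSpace.toDual_symm_apply]
    exact (g_eq ⟨v, Submodule.mem_span_singleton_self v⟩).trans
      (LinearPMap.mkSpanSingleton_apply (σ := RingHom.id ℝ) ℝ ℝ hv (Φ v))

theorem exists_finite_inner_le_and_le_inner_add
    (hom : ∀ l : ℝ, 0 < l → ∀ x, Φ (l • x) = l * Φ x) (convex : ConvexOn ℝ univ Φ) {ε : ℝ}
    (hε : 0 < ε) :
    ∃ (N : ℕ) (p : Fin N → E), (∀ i x, ⟪p i, x⟫ ≤ Φ x) ∧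
      ∀ v, ‖v‖ = 1 → ∃ i, Φ v ≤ ⟪p i, v⟫ + ε := by
  have continuous : Continuous Φ := continuousOn_univ.1 (convex.continuousOn isOpen_univ)
  have subgradient (v : E) (hv : v ∈ sphere (0 : E) 1) :
      ∃ p : E, (∀ x, ⟪p, x⟫ ≤ Φ x) ∧ ⟪p, v⟫ = Φ v :=
    exists_inner_le_and_inner_eq hom convex (ne_zero_of_mem_unit_sphere ⟨v, hv⟩)
  choose! p p_le p_eq using subgradient
  obtain ⟨t, ht, cover⟩ := (isCompact_sphere (0 : E) 1).elim_nhds_subcover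
    (fun v => {w | Φ w < ⟪p v, w⟫ + ε}) fun v hv =>
      (isOpen_lt continuous (by fun_prop)).mem_nhds (by simp [p_eq v hv, hε])
  refine ⟨t.card, fun i => p (t.equivFin.symm i), fun i => p_le _ (ht _ (t.equivFin.symm i).2),
    fun v hv => ?_⟩
  obtain ⟨w, hw, hvw⟩ := mem_iUnion₂.1 (cover (mem_sphere_zero_iff_norm.2 hv))
  exact ⟨t.equivFin ⟨w, hw⟩, by simpa using hvw.le⟩

end LinearMinorants

section Shadow

lemma exists_sub_smul_mem_frontier {E : Type*} [NormedAddCommGroup E] [NormedSpace ℝ E] {B : Set E}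
    (hB : Bornology.IsBounded B) {x q : E} (hx : x ∈ B) (hq : q ≠ 0) :
    ∃ s : ℝ, 0 ≤ s ∧ x - s • q ∈ frontier B := by
  let ray (s : ℝ≥0) : E := x - s • q
  have ray_not_subset : ray ⁻¹' B ≠ univ := fun h => by
    obtain ⟨R, hR⟩ := hB.subset_closedBall x
    have hq' : 0 < ‖q‖ := norm_pos_iff.2 hq
    have := hR (h ▸ mem_univ ((|R| + 1) / ‖q‖).toNNReal : _ ∈ ray ⁻¹' B)
    rw [mem_closedBall, dist_eq_norm, sub_sub_cancel_left, norm_neg, NNReal.smul_def, norm_smul,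
      Real.coe_toNNReal _ (by positivity), Real.norm_of_nonneg (by positivity),
      div_mul_cancel₀ _ hq'.ne'] at this
    linarith [le_abs_self R]
  obtain ⟨s, hs⟩ := nonempty_frontier_iff.2 ⟨⟨0, by simpa [ray] using hx⟩, ray_not_subset⟩
  have : Continuous ray := by fun_prop
  exact ⟨s, s.2, this.frontier_preimage_subset B hs⟩

variable {n : ℕ} {B C D : Set (EuclideanSpace ℝ (Fin n))} {q : EuclideanSpace ℝ (Fin n)}

/-- The shadow that a set `D` casts on the boundary of `B` when light travels in direction `-q`.
Only points with a unique normal are kept, which neglects a null set. -/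
def shadow (B : Set (EuclideanSpace ℝ (Fin n))) (q : EuclideanSpace ℝ (Fin n))
    (D : Set (EuclideanSpace ℝ (Fin n))) : Set (EuclideanSpace ℝ (Fin n)) :=
  {z ∈ regularBoundary B | ∃ s : ℝ, 0 ≤ s ∧ z + s • q ∈ D}

lemma shadow_subset_regularBoundary : shadow B q D ⊆ regularBoundary B := sep_subset _ _

lemma injOn_projOrth_of_inner_innerNormal_pos (hD : D ⊆ regularBoundary C)
    (hpos : ∀ x ∈ D, 0 < ⟪q, innerNormal C x⟫) : InjOn (projOrth q) D := by
  intro x hx y hy hxy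
  obtain ⟨t, ht⟩ := projOrth_eq_projOrth_iff.1 hxy
  have support_x := (isInnerNormalAt_innerNormal (hD hx)).2 y (regularBoundary_subset (hD hy))
  have support_y := (isInnerNormalAt_innerNormal (hD hy)).2 x (regularBoundary_subset (hD hx))
  rw [← neg_sub, ← ht, inner_neg_right, inner_smul_right, real_inner_comm] at support_x
  rw [← ht, inner_smul_right, real_inner_comm] at support_y
  have t_nonpos : t ≤ 0 := nonpos_of_mul_nonpos_left (by linarith) (hpos x hx)
  have t_nonneg : 0 ≤ t := nonneg_of_mul_nonneg_left support_y (hpos y hy)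
  rw [le_antisymm t_nonpos t_nonneg, zero_smul] at ht
  exact sub_eq_zero.1 ht.symm

lemma measurableSet_shadow (hB : IsCompact B) (hD : MeasurableSet D)
    (hinj : InjOn (projOrth q) D) : MeasurableSet (shadow B q D) := by
  obtain rfl | hq := eq_or_ne q 0
  · have shadow_zero : shadow B 0 D = regularBoundary B ∩ D := by
      simp only [shadow, smul_zero, add_zero]
      exact Set.ext fun z => ⟨fun ⟨hz, _, _, hzD⟩ => ⟨hz, hzD⟩,
        fun ⟨hz, hzD⟩ => ⟨hz, 0, le_rfl, hzD⟩⟩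
    exact shadow_zero ▸ (measurableSet_regularBoundary hB).inter hD
  let slide (u : EuclideanSpace ℝ (Fin n) × ℝ) : EuclideanSpace ℝ (Fin n) := u.1 - u.2 • q
  have continuous_slide : Continuous slide := by fun_prop
  let T : Set (EuclideanSpace ℝ (Fin n) × ℝ) := D ×ˢ Ici 0 ∩ slide ⁻¹' regularBoundary B
  have measurable_T : MeasurableSet T :=
    (hD.prod measurableSet_Ici).inter
      (continuous_slide.measurable (measurableSet_regularBoundary hB))
  have injOn_slide : InjOn slide T := by
    rintro ⟨x, s⟩ ⟨⟨hx, -⟩, -⟩ ⟨y, t⟩ ⟨⟨hy, -⟩, -⟩ (h : x - s • q = y - t • q)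
    have : x = y := hinj hx hy <| projOrth_eq_projOrth_iff.2
      ⟨s - t, by rw [sub_smul, sub_eq_sub_iff_sub_eq_sub.1 h]⟩
    subst this
    rw [smul_left_injective ℝ hq (sub_right_injective h)]
  have image_slide : slide '' T = shadow B q D := by
    refine Subset.antisymm ?_ fun z ⟨hz, s, hs, hzs⟩ => ⟨(z + s • q, s), ⟨⟨hzs, hs⟩, ?_⟩, ?_⟩
    · rintro _ ⟨⟨x, s⟩, ⟨⟨hx, hs⟩, hz⟩, rfl⟩
      exact ⟨hz, s, hs, by simpa [slide] using hx⟩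
    · simpa [slide] using hz
    · simp [slide]
  rw [← image_slide]
  exact measurable_T.image_of_continuousOn_injOn continuous_slide.continuousOn injOn_slide

lemma inner_innerNormal_nonneg_of_mem_shadow (hCB : C ⊆ B) (hD : D ⊆ regularBoundary C)
    (hpos : ∀ x ∈ D, 0 < ⟪q, innerNormal C x⟫) {z : EuclideanSpace ℝ (Fin n)}
    (hz : z ∈ shadow B q D) : 0 ≤ ⟪q, innerNormal B z⟫ := by
  obtain ⟨hzB, s, hs, hzs⟩ := hz
  have normal := isInnerNormalAt_innerNormal hzB
  obtain rfl | hs := hs.eq_or_lt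
  · rw [zero_smul, add_zero] at hzs
    have normal_C : IsInnerNormalAt C z (innerNormal B z) :=
      ⟨normal.1, fun y hy => normal.2 y (hCB hy)⟩
    rw [normal_C.eq_innerNormal (hD hzs)]
    exact (hpos z hzs).le
  · have support := normal.2 _ (hCB (regularBoundary_subset (hD hzs)))
    rw [add_sub_cancel_left, inner_smul_right, real_inner_comm] at support
    exact nonneg_of_mul_nonneg_right support hs

lemma shadow_subset_halfSpace {w : EuclideanSpace ℝ (Fin n)} {c : ℝ} (hB : Convex ℝ B)
    (hCB : C ⊆ B) (hsec : B ∩ {x | ⟪w, x⟫ = c} ⊆ C) (hD : D ⊆ regularBoundary C)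
    (hpos : ∀ x ∈ D, 0 < ⟪q, innerNormal C x⟫) (hDw : D ⊆ {x | ⟪w, x⟫ < c}) :
    shadow B q D ⊆ {x | ⟪w, x⟫ < c} := by
  rintro z ⟨hzB, s, hs, hzs⟩
  by_contra hz
  obtain ⟨θ, ⟨θ_nonneg, θ_le⟩, hθ⟩ : ∃ θ ∈ Icc (0 : ℝ) 1, ⟪w, z + θ • s • q⟫ = c := by
    refine intermediate_value_Icc' zero_le_one (by fun_prop) ⟨?_, ?_⟩
    · simpa using (hDw hzs).le
    · simpa using hz
  have mem_B : z + θ • s • q ∈ B := hB.add_smul_mem (regularBoundary_subset hzB)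
    (hCB (regularBoundary_subset (hD hzs))) ⟨θ_nonneg, θ_le⟩
  have support := (isInnerNormalAt_innerNormal (hD hzs)).2 _ (hsec ⟨mem_B, hθ⟩)
  rw [show z + θ • s • q - (z + s • q) = -(((1 - θ) * s) • q) by module, inner_neg_right,
    inner_smul_right, real_inner_comm] at support
  have : (1 - θ) * s = 0 := le_antisymm
    (nonpos_of_mul_nonpos_left (by linarith) (hpos _ hzs))
    (mul_nonneg (sub_nonneg.2 θ_le) hs)
  rw [smul_smul, show θ * s = s by linarith] at hθ
  exact (hDw hzs).ne hθ

end Shadow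

section ShadowMeasure

variable {d : ℕ} {B C D : Set (EuclideanSpace ℝ (Fin (d + 1)))}
  {q : EuclideanSpace ℝ (Fin (d + 1))}

lemma hausdorffMeasure_image_projOrth_le_image_shadow (hB : Bornology.IsBounded B)
    (hBreg : μH[(d : ℝ)] (frontier B \ regularBoundary B) = 0) (hq : q ≠ 0) (hDB : D ⊆ B) :
    μH[(d : ℝ)] (projOrth q '' D) ≤ μH[(d : ℝ)] (projOrth q '' shadow B q D) := by
  have cover : projOrth q '' D ⊆
      projOrth q '' shadow B q D ∪ projOrth q '' (frontier B \ regularBoundary B) := by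
    rintro _ ⟨x, hx, rfl⟩
    obtain ⟨s, hs, hz⟩ := exists_sub_smul_mem_frontier hB (hDB hx) hq
    have same_proj : projOrth q (x - s • q) = projOrth q x :=
      projOrth_eq_projOrth_iff.2 ⟨-s, by module⟩
    rw [← same_proj, ← image_union]
    refine mem_image_of_mem _ ((em (x - s • q ∈ regularBoundary B)).imp (fun hreg => ?_) ?_)
    · exact ⟨hreg, s, hs, by simpa using hx⟩
    · exact fun hreg => ⟨hz, hreg⟩
  have null : μH[(d : ℝ)] (projOrth q '' (frontier B \ regularBoundary B)) = 0 :=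
    le_antisymm (hBreg ▸ hausdorffMeasure_orthogonalProjectionOnto_le _ _ _ d.cast_nonneg) zero_le
  calc μH[(d : ℝ)] (projOrth q '' D)
      ≤ μH[(d : ℝ)] (projOrth q '' shadow B q D) +
          μH[(d : ℝ)] (projOrth q '' (frontier B \ regularBoundary B)) :=
        (measure_mono cover).trans (measure_union_le _ _)
    _ = μH[(d : ℝ)] (projOrth q '' shadow B q D) := by rw [null, add_zero]

theorem setLIntegral_inner_innerNormal_le_shadow (hB : IsCompact B) (hC : IsCompact C)
    (hCB : C ⊆ B) (hBreg : μH[(d : ℝ)] (frontier B \ regularBoundary B) = 0)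
    (hD : MeasurableSet D) (hDC : D ⊆ regularBoundary C)
    (hpos : ∀ x ∈ D, 0 < ⟪q, innerNormal C x⟫) :
    ∫⁻ x in D, ENNReal.ofReal ⟪q, innerNormal C x⟫ ∂μH[(d : ℝ)] ≤
      ∫⁻ z in shadow B q D, ENNReal.ofReal ⟪q, innerNormal B z⟫ ∂μH[(d : ℝ)] := by
  obtain rfl | hq := eq_or_ne q 0
  · simp
  have hinj := injOn_projOrth_of_inner_innerNormal_pos hDC hpos
  have measurable_shadow := measurableSet_shadow hB hD hinj
  calc ∫⁻ x in D, ENNReal.ofReal ⟪q, innerNormal C x⟫ ∂μH[(d : ℝ)]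
      ≤ ENNReal.ofReal ‖q‖ * μH[(d : ℝ)] (projOrth q '' D) :=
        setLIntegral_inner_innerNormal_le hC hD hDC hinj
    _ ≤ ENNReal.ofReal ‖q‖ * μH[(d : ℝ)] (projOrth q '' shadow B q D) := by
        gcongr ENNReal.ofReal ‖q‖ * ?_
        exact hausdorffMeasure_image_projOrth_le_image_shadow hB.isBounded hBreg hq
          (hDC.trans (regularBoundary_subset.trans hCB))
    _ ≤ ∫⁻ z in shadow B q D, ENNReal.ofReal |⟪q, innerNormal B z⟫| ∂μH[(d : ℝ)] :=
        norm_mul_hausdorffMeasure_image_projOrth_le hB measurable_shadow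
          shadow_subset_regularBoundary q
    _ = ∫⁻ z in shadow B q D, ENNReal.ofReal ⟪q, innerNormal B z⟫ ∂μH[(d : ℝ)] :=
        setLIntegral_congr_fun measurable_shadow fun z hz => by
          rw [abs_of_nonneg (inner_innerNormal_nonneg_of_mem_shadow hCB hDC hpos hz)]

end ShadowMeasure

section LeadingRegion

variable {n : ℕ} {ι : Type*} [LinearOrder ι] {B C S : Set (EuclideanSpace ℝ (Fin n))}
  {p : ι → EuclideanSpace ℝ (Fin n)} {x : EuclideanSpace ℝ (Fin n)}

/-- The part of the boundary of `C` where, among the linear functions `⟪p j, ·⟫` evaluated at the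
inner normal, the `i`-th one is positive and maximal, ties being won by the smallest index. -/
def leadingRegion (C : Set (EuclideanSpace ℝ (Fin n))) (p : ι → EuclideanSpace ℝ (Fin n)) (i : ι) :
    Set (EuclideanSpace ℝ (Fin n)) :=
  {x ∈ regularBoundary C | 0 < ⟪p i, innerNormal C x⟫ ∧
    (∀ j, ⟪p j, innerNormal C x⟫ ≤ ⟪p i, innerNormal C x⟫) ∧
    ∀ j < i, ⟪p j, innerNormal C x⟫ < ⟪p i, innerNormal C x⟫}

lemma leadingRegion_subset (i : ι) : leadingRegion C p i ⊆ regularBoundary C := sep_subset _ _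

lemma exists_mem_leadingRegion [Finite ι] (hx : x ∈ regularBoundary C)
    (hpos : ∃ i, 0 < ⟪p i, innerNormal C x⟫) : ∃ i, x ∈ leadingRegion C p i := by
  obtain ⟨i₀, hi₀⟩ := hpos
  have : Nonempty ι := ⟨i₀⟩
  obtain ⟨m, hm⟩ := Finite.exists_max fun i => (⟪p i, innerNormal C x⟫ : ℝ)
  obtain ⟨k, hk, k_least⟩ := exists_minimal_of_wellFoundedLT
    (fun i => ∀ j, ⟪p j, innerNormal C x⟫ ≤ ⟪p i, innerNormal C x⟫) ⟨m, hm⟩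
  refine ⟨k, hx, hi₀.trans_le (hk i₀), hk, fun j hj => ?_⟩
  by_contra! h
  exact (k_least (fun l => (hk l).trans h) hj.le).not_gt hj

lemma ofReal_le_sum_indicator_leadingRegion_add [Fintype ι] {Φ : EuclideanSpace ℝ (Fin n) → ℝ}
    {ε : ℝ≥0} (hx : x ∈ regularBoundary C) (hp : ∀ v, ‖v‖ = 1 → ∃ i, Φ v ≤ ⟪p i, v⟫ + ε) :
    ENNReal.ofReal (Φ (innerNormal C x)) ≤
      ∑ i, (leadingRegion C p i).indicator (fun x => ENNReal.ofReal ⟪p i, innerNormal C x⟫) x +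
        ε := by
  obtain ⟨i, hi⟩ := hp _ (norm_innerNormal hx)
  obtain hnonpos | hpos := le_or_gt ⟪p i, innerNormal C x⟫ (0 : ℝ)
  · exact (ENNReal.ofReal_le_ofReal (by linarith)).trans <|
      ENNReal.ofReal_coe_nnreal.trans_le le_add_self
  obtain ⟨k, hk⟩ := exists_mem_leadingRegion hx ⟨i, hpos⟩
  calc ENNReal.ofReal (Φ (innerNormal C x))
      ≤ ENNReal.ofReal ⟪p k, innerNormal C x⟫ + ε := by
        rw [← ENNReal.ofReal_coe_nnreal, ← ENNReal.ofReal_add hk.2.1.le ε.coe_nonneg]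
        exact ENNReal.ofReal_le_ofReal (by linarith [hk.2.2.1 i])
    _ = (leadingRegion C p k).indicator (fun x => ENNReal.ofReal ⟪p k, innerNormal C x⟫) x + ε := by
        rw [indicator_of_mem hk]
    _ ≤ _ := add_le_add_left (Finset.single_le_sum (f := fun k => (leadingRegion C p k).indicator
        (fun x => ENNReal.ofReal ⟪p k, innerNormal C x⟫) x) (fun _ _ => zero_le)
        (Finset.mem_univ k)) _

lemma measurableSet_leadingRegion [Countable ι] (hC : IsCompact C) (i : ι) :
    MeasurableSet (leadingRegion C p i) := by
  have measurable_inner (j : ι) : Measurable fun x => (⟪p j, innerNormal C x⟫ : ℝ) :=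
    measurable_const.inner (measurable_innerNormal hC)
  simp only [leadingRegion, ofPred_and, ofPred_forall]
  exact (measurableSet_regularBoundary hC).inter <|
    (measurableSet_lt measurable_const (measurable_inner i)).inter <|
    (MeasurableSet.iInter fun j =>
      measurableSet_le (measurable_inner j) (measurable_inner i)).inter <|
    MeasurableSet.iInter fun j => MeasurableSet.iInter fun _ =>
      measurableSet_lt (measurable_inner j) (measurable_inner i)

lemma smul_inner_le_of_add_smul_mem_leadingRegion {i j : ι} {z : EuclideanSpace ℝ (Fin n)} {s t : ℝ}
    (ht : 0 ≤ t) (hi : z + s • p i ∈ leadingRegion C p i) (hj : z + t • p j ∈ leadingRegion C p j) :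
    s ≤ t ∧ s * ⟪p i, innerNormal C (z + s • p i)⟫ ≤ t * ⟪p j, innerNormal C (z + s • p i)⟫ := by
  have support := (isInnerNormalAt_innerNormal hi.1).2 _ (regularBoundary_subset hj.1)
  rw [add_sub_add_left_eq_sub, inner_sub_right, inner_smul_right, inner_smul_right,
    real_inner_comm (p i), real_inner_comm (p j), sub_nonneg] at support
  refine ⟨le_of_mul_le_mul_right ?_ hi.2.1, support⟩
  exact support.trans (mul_le_mul_of_nonneg_left (hi.2.2.1 j) ht)

theorem pairwise_disjoint_shadow_leadingRegion :
    Pairwise (Disjoint on fun i => shadow B (p i) (leadingRegion C p i ∩ S)) := by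
  intro i j hij
  refine disjoint_left.2 ?_
  rintro z ⟨-, s, hs, hi, -⟩ ⟨-, t, ht, hj, -⟩
  have at_i := smul_inner_le_of_add_smul_mem_leadingRegion ht hi hj
  have at_j := smul_inner_le_of_add_smul_mem_leadingRegion hs hj hi
  obtain rfl : s = t := le_antisymm at_i.1 at_j.1
  have tie : ⟪p i, innerNormal C (z + s • p i)⟫ ≤ ⟪p j, innerNormal C (z + s • p i)⟫ ∧
      ⟪p j, innerNormal C (z + s • p j)⟫ ≤ ⟪p i, innerNormal C (z + s • p j)⟫ := by
    obtain rfl | hs := hs.eq_or_lt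
    · simp only [zero_smul, add_zero] at hi hj ⊢
      exact ⟨hj.2.2.1 i, hi.2.2.1 j⟩
    · exact ⟨le_of_mul_le_mul_left at_i.2 hs, le_of_mul_le_mul_left at_j.2 hs⟩
  obtain hlt | hlt := hij.lt_or_gt
  · exact (hj.2.2.2 i hlt).not_ge tie.2
  · exact (hi.2.2.2 j hlt).not_ge tie.1

end LeadingRegion

section Comparison

variable {d : ℕ} {B C : Set (EuclideanSpace ℝ (Fin (d + 1)))}
  {Φ : EuclideanSpace ℝ (Fin (d + 1)) → ℝ} {w : EuclideanSpace ℝ (Fin (d + 1))} {c : ℝ}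

lemma measurableSet_halfSpace {E : Type*} [NormedAddCommGroup E] [InnerProductSpace ℝ E]
    [MeasurableSpace E] [OpensMeasurableSpace E] (w : E) (c : ℝ) :
    MeasurableSet {x : E | ⟪w, x⟫ < c} :=
  (isOpen_lt (by fun_prop) continuous_const).measurableSet

lemma sum_setLIntegral_leadingRegion_le {ι : Type*} [LinearOrder ι] [Fintype ι]
    {p : ι → EuclideanSpace ℝ (Fin (d + 1))} (hB : IsCompact B) (hBconv : Convex ℝ B)
    (hBreg : μH[(d : ℝ)] (frontier B \ regularBoundary B) = 0) (hC : IsCompact C) (hCB : C ⊆ B)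
    (hsec : B ∩ {x | ⟪w, x⟫ = c} ⊆ C) (hp : ∀ i x, ⟪p i, x⟫ ≤ Φ x) :
    ∑ i, ∫⁻ x in leadingRegion C p i ∩ {x | ⟪w, x⟫ < c},
        ENNReal.ofReal ⟪p i, innerNormal C x⟫ ∂μH[(d : ℝ)] ≤
      ∫⁻ x in regularBoundary B ∩ {x | ⟪w, x⟫ < c},
        ENNReal.ofReal (Φ (innerNormal B x)) ∂μH[(d : ℝ)] := by
  let D (i : ι) := leadingRegion C p i ∩ {x | ⟪w, x⟫ < c}
  have measurable_D i : MeasurableSet (D i) :=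
    (measurableSet_leadingRegion hC i).inter (measurableSet_halfSpace w c)
  have D_subset i : D i ⊆ regularBoundary C := inter_subset_left.trans (leadingRegion_subset i)
  have pos_of_mem_D i : ∀ x ∈ D i, 0 < ⟪p i, innerNormal C x⟫ := fun x hx => hx.1.2.1
  have measurable_shadow i : MeasurableSet (shadow B (p i) (D i)) := measurableSet_shadow hB
    (measurable_D i) (injOn_projOrth_of_inner_innerNormal_pos (D_subset i) (pos_of_mem_D i))
  calc ∑ i, ∫⁻ x in D i, ENNReal.ofReal ⟪p i, innerNormal C x⟫ ∂μH[(d : ℝ)]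
      ≤ ∑ i, ∫⁻ z in shadow B (p i) (D i), ENNReal.ofReal ⟪p i, innerNormal B z⟫ ∂μH[(d : ℝ)] :=
        Finset.sum_le_sum fun i _ => setLIntegral_inner_innerNormal_le_shadow hB hC hCB hBreg
          (measurable_D i) (D_subset i) (pos_of_mem_D i)
    _ ≤ ∑ i, ∫⁻ z in shadow B (p i) (D i), ENNReal.ofReal (Φ (innerNormal B z)) ∂μH[(d : ℝ)] := by
        gcongr
        exact hp _ _
    _ = ∫⁻ z in ⋃ i, shadow B (p i) (D i), ENNReal.ofReal (Φ (innerNormal B z)) ∂μH[(d : ℝ)] := by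
        rw [lintegral_iUnion measurable_shadow pairwise_disjoint_shadow_leadingRegion, tsum_fintype]
    _ ≤ ∫⁻ x in regularBoundary B ∩ {x | ⟪w, x⟫ < c},
          ENNReal.ofReal (Φ (innerNormal B x)) ∂μH[(d : ℝ)] :=
        lintegral_mono_set <| iUnion_subset fun i => subset_inter shadow_subset_regularBoundary <|
          shadow_subset_halfSpace hBconv hCB hsec (D_subset i) (pos_of_mem_D i) inter_subset_right

lemma setLIntegral_regularBoundary_le_sum_leadingRegion {ι : Type*} [LinearOrder ι] [Fintype ι]
    {p : ι → EuclideanSpace ℝ (Fin (d + 1))} {ε : ℝ≥0} {S : Set (EuclideanSpace ℝ (Fin (d + 1)))}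
    (hC : IsCompact C) (hS : MeasurableSet S) (hp : ∀ v, ‖v‖ = 1 → ∃ i, Φ v ≤ ⟪p i, v⟫ + ε) :
    ∫⁻ x in regularBoundary C ∩ S, ENNReal.ofReal (Φ (innerNormal C x)) ∂μH[(d : ℝ)] ≤
      ∑ i, ∫⁻ x in leadingRegion C p i ∩ S, ENNReal.ofReal ⟪p i, innerNormal C x⟫ ∂μH[(d : ℝ)] +
        ε * μH[(d : ℝ)] (regularBoundary C) := by
  have measurable_summand i : Measurable ((leadingRegion C p i).indicator fun x =>
      ENNReal.ofReal ⟪p i, innerNormal C x⟫) :=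
    (measurable_const.inner (measurable_innerNormal hC)).ennreal_ofReal.indicator
      (measurableSet_leadingRegion hC i)
  calc ∫⁻ x in regularBoundary C ∩ S, ENNReal.ofReal (Φ (innerNormal C x)) ∂μH[(d : ℝ)]
      ≤ ∫⁻ x in regularBoundary C ∩ S, (∑ i, (leadingRegion C p i).indicator
          (fun x => ENNReal.ofReal ⟪p i, innerNormal C x⟫) x + ε) ∂μH[(d : ℝ)] :=
        setLIntegral_mono' ((measurableSet_regularBoundary hC).inter hS) fun x hx =>
          ofReal_le_sum_indicator_leadingRegion_add hx.1 hp
    _ = ∑ i, ∫⁻ x in leadingRegion C p i ∩ (regularBoundary C ∩ S),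
            ENNReal.ofReal ⟪p i, innerNormal C x⟫ ∂μH[(d : ℝ)] +
          ε * μH[(d : ℝ)] (regularBoundary C ∩ S) := by
        rw [lintegral_add_right _ measurable_const, setLIntegral_const,
          lintegral_finsetSum _ fun i _ => measurable_summand i]
        simp only [setLIntegral_indicator (measurableSet_leadingRegion hC _)]
    _ ≤ ∑ i, ∫⁻ x in leadingRegion C p i ∩ S, ENNReal.ofReal ⟪p i, innerNormal C x⟫ ∂μH[(d : ℝ)] +
          ε * μH[(d : ℝ)] (regularBoundary C) := by
        gcongr
        · exact inter_subset_right
        · exact inter_subset_left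

theorem setLIntegral_frontier_inter_halfSpace_le (hB : IsCompact B) (hBconv : Convex ℝ B)
    (hC : IsCompact C) (hCB : C ⊆ B) (hspan : vectorSpan ℝ C = ⊤)
    (hsec : B ∩ {x | ⟪w, x⟫ = c} ⊆ C) (hom : ∀ l : ℝ, 0 < l → ∀ x, Φ (l • x) = l * Φ x)
    (convex : ConvexOn ℝ univ Φ)
    {νC νB : EuclideanSpace ℝ (Fin (d + 1)) → EuclideanSpace ℝ (Fin (d + 1))}
    (hνC : ∀ᵐ x ∂μH[(d : ℝ)].restrict (frontier C), IsInnerNormalAt C x (νC x))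
    (hνB : ∀ᵐ x ∂μH[(d : ℝ)].restrict (frontier B), IsInnerNormalAt B x (νB x)) :
    ∫⁻ x in frontier C ∩ {x | ⟪w, x⟫ < c}, ENNReal.ofReal (Φ (νC x)) ∂μH[(d : ℝ)] ≤
      ∫⁻ x in frontier B ∩ {x | ⟪w, x⟫ < c}, ENNReal.ofReal (Φ (νB x)) ∂μH[(d : ℝ)] := by
  have hspanB : vectorSpan ℝ B = ⊤ := top_le_iff.1 (hspan ▸ vectorSpan_mono ℝ hCB)
  have hlt := measurableSet_halfSpace w c
  rw [setLIntegral_frontier_inter_eq_setLIntegral_regularBoundary_inter hC hspan hνC hlt fun v =>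
      ENNReal.ofReal (Φ v),
    setLIntegral_frontier_inter_eq_setLIntegral_regularBoundary_inter hB hspanB hνB hlt fun v =>
      ENNReal.ofReal (Φ v)]
  have hBreg : μH[(d : ℝ)] (frontier B \ regularBoundary B) = 0 := by
    have ae_mem := (ae_restrict_iff' isClosed_frontier.measurableSet).1
      (ae_mem_regularBoundary_and_eq_innerNormal hB hspanB hνB)
    exact measure_mono_null (fun x hx => fun h => hx.2 (h hx.1).1) (mem_ae_iff.1 ae_mem)
  refine ennreal_le_of_forall_pos_le_add_mul
    (hausdorffMeasure_regularBoundary_lt_top hC.isBounded).ne fun ε hε => ?_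
  obtain ⟨N, p, p_le, le_p⟩ := exists_finite_inner_le_and_le_inner_add hom convex (ε := ε) hε
  exact (setLIntegral_regularBoundary_le_sum_leadingRegion hC hlt le_p).trans <|
    add_le_add_left (sum_setLIntegral_leadingRegion_le hB hBconv hBreg hC hCB hsec p_le) _

end Comparison

section Cone

variable {n : ℕ} {b w : EuclideanSpace ℝ (Fin n)} {c : ℝ} {B E : Set (EuclideanSpace ℝ (Fin n))}

lemma subset_coneOver : E ⊆ coneOver b E := fun y hy => ⟨1, ⟨zero_le_one, le_rfl⟩, y, hy, by simp⟩

lemma apex_mem_coneOver (hE : E.Nonempty) : b ∈ coneOver b E :=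
  hE.elim fun y hy => ⟨0, ⟨le_rfl, zero_le_one⟩, y, hy, by simp⟩

lemma coneOver_subset (hB : Convex ℝ B) (hb : b ∈ B) (hE : E ⊆ B) : coneOver b E ⊆ B := by
  rintro _ ⟨t, ⟨ht, ht'⟩, y, hy, rfl⟩
  exact hB hb (hE hy) (sub_nonneg.2 ht') ht (sub_add_cancel 1 t)

lemma isCompact_coneOver (hE : IsCompact E) : IsCompact (coneOver b E) := by
  have image_eq : (fun u : ℝ × EuclideanSpace ℝ (Fin n) => (1 - u.1) • b + u.1 • u.2) ''
      (Icc 0 1 ×ˢ E) = coneOver b E := by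
    refine Subset.antisymm ?_ ?_
    · rintro _ ⟨⟨t, y⟩, ⟨ht, hy⟩, rfl⟩
      exact ⟨t, ht, y, hy, rfl⟩
    · rintro _ ⟨t, ht, y, hy, rfl⟩
      exact ⟨(t, y), ⟨ht, hy⟩, rfl⟩
  exact image_eq ▸ (isCompact_Icc.prod hE).image (by fun_prop)

lemma inner_coneOver_point {y : EuclideanSpace ℝ (Fin n)} (hy : ⟪w, y⟫ = c) (t : ℝ) :
    ⟪w, (1 - t) • b + t • y⟫ = ⟪w, b⟫ + t * (c - ⟪w, b⟫) := by
  rw [inner_add_right, inner_smul_right, inner_smul_right, hy]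
  ring

lemma apex_notMem_interior_coneOver (hb : ⟪w, b⟫ < c) (hE : E ⊆ {x | ⟪w, x⟫ = c}) :
    b ∉ interior (coneOver b E) := by
  intro hbI
  have isLocalMin : IsLocalMin (innerSL ℝ w) b := by
    filter_upwards [mem_interior_iff_mem_nhds.1 hbI]
    rintro _ ⟨t, ht, y, hy, rfl⟩
    rw [innerSL_apply_apply, innerSL_apply_apply, inner_coneOver_point (hE hy)]
    exact le_add_of_nonneg_right (mul_nonneg ht.1 (sub_nonneg.2 hb.le))
  have inner_eq_zero := isLocalMin.hasFDerivAt_eq_zero (innerSL ℝ w).hasFDerivAt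
  obtain ⟨_, _, y, hy, _⟩ := interior_subset hbI
  have height_b : ⟪w, b⟫ = (0 : ℝ) := DFunLike.congr_fun inner_eq_zero b
  have height_y : ⟪w, y⟫ = (0 : ℝ) := DFunLike.congr_fun inner_eq_zero y
  exact hb.ne (height_b.trans (height_y.symm.trans (hE hy)))

lemma coneOver_relBoundary_subset_frontier (hb : ⟪w, b⟫ < c) (hE : E ⊆ {x | ⟪w, x⟫ = c}) :
    coneOver b (relBoundary {x | ⟪w, x⟫ = c} E) ⊆ frontier (coneOver b E) := by
  rintro _ ⟨t, ht, y, ⟨hyE, hyR⟩, rfl⟩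
  refine ⟨subset_closure ⟨t, ht, y, hyE, rfl⟩, fun hI => ?_⟩
  obtain rfl | ht₀ := ht.1.eq_or_lt
  · exact apex_notMem_interior_coneOver hb hE (by simpa using hI)
  have continuous_scale : Continuous fun u : EuclideanSpace ℝ (Fin n) => (1 - t) • b + t • u := by
    fun_prop
  obtain ⟨ε, hε, hball⟩ := Metric.mem_nhds_iff.1 <|
    continuous_scale.continuousAt.preimage_mem_nhds (mem_interior_iff_mem_nhds.1 hI)
  refine hyR ⟨ε, hε, fun u ⟨hu, hu'⟩ => ?_⟩
  obtain ⟨s, -, v, hv, huv⟩ := hball hu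
  have same_height : ⟪w, b⟫ + t * (c - ⟪w, b⟫) = ⟪w, b⟫ + s * (c - ⟪w, b⟫) := by
    rw [← inner_coneOver_point hu', ← inner_coneOver_point (hE hv)]
    exact congrArg (inner ℝ w) huv
  obtain rfl : t = s := mul_right_cancel₀ (sub_pos.2 hb).ne' (add_left_cancel same_height)
  rwa [smul_right_injective _ ht₀.ne' (add_left_cancel huv)]

lemma coneOver_subset_halfSpace_union (hb : ⟪w, b⟫ < c) (hE : E ⊆ {x | ⟪w, x⟫ = c}) :
    coneOver b E ⊆ {x | ⟪w, x⟫ < c} ∪ E := by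
  rintro _ ⟨t, ht, y, hy, rfl⟩
  obtain rfl | ht₁ := ht.2.eq_or_lt
  · simpa using Or.inr hy
  · refine Or.inl ?_
    rw [mem_ofPred_eq, inner_coneOver_point (hE hy)]
    nlinarith [sub_pos.2 hb]

end Cone

section HyperplaneSection

lemma vectorSpan_eq_top_of_ball_inter_hyperplane_subset {E : Type*} [NormedAddCommGroup E]
    [InnerProductSpace ℝ E] {K : Set E} {w x b : E} {ε c : ℝ} (hε : 0 < ε) (hx : ⟪w, x⟫ = c)
    (hball : ball x ε ∩ {y | ⟪w, y⟫ = c} ⊆ K) (hb : b ∈ K) (hbc : ⟪w, b⟫ ≠ c) :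
    vectorSpan ℝ K = ⊤ := by
  have hxK : x ∈ K := hball ⟨mem_ball_self hε, hx⟩
  have mem_of_inner_eq_zero (u : E) (hu : ⟪w, u⟫ = (0 : ℝ)) : u ∈ vectorSpan ℝ K := by
    have tendsto_add_smul : Tendsto (fun s : ℝ => x + s • u) (𝓝 0) (𝓝 x) :=
      Continuous.tendsto' (by fun_prop) _ _ (by simp)
    obtain ⟨s, hs, hs₀⟩ := ((tendsto_add_smul.eventually (ball_mem_nhds x hε)).filter_mono
      nhdsWithin_le_nhds |>.and (self_mem_nhdsWithin : {0}ᶜ ∈ 𝓝[≠] (0 : ℝ))).exists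
    have hsK : x + s • u ∈ K := hball ⟨hs, by simp [inner_add_right, inner_smul_right, hu, hx]⟩
    have := vsub_mem_vectorSpan ℝ hsK hxK
    rwa [vsub_eq_sub, add_sub_cancel_left, Submodule.smul_mem_iff _ hs₀] at this
  refine Submodule.eq_top_iff'.2 fun z => ?_
  have height_ne_zero : ⟪w, b - x⟫ ≠ (0 : ℝ) := by rwa [inner_sub_right, hx, sub_ne_zero]
  have horizontal := mem_of_inner_eq_zero (z - (⟪w, z⟫ / ⟪w, b - x⟫) • (b - x)) <| by
    rw [inner_sub_right, inner_smul_right, div_mul_cancel₀ _ height_ne_zero, sub_self]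
  have vertical := Submodule.smul_mem _ (⟪w, z⟫ / ⟪w, b - x⟫ : ℝ) (vsub_mem_vectorSpan ℝ hb hxK)
  exact sub_add_cancel z _ ▸ Submodule.add_mem _ horizontal vertical

variable {d : ℕ} {B : Set (EuclideanSpace ℝ (Fin (d + 1)))} {w : EuclideanSpace ℝ (Fin (d + 1))}

lemma hausdorffMeasure_relBoundary_hyperplane_eq_zero (hB : Convex ℝ B) (hw : w ≠ 0) (c : ℝ) :
    μH[(d : ℝ)] (relBoundary {x | ⟪w, x⟫ = c} (B ∩ {x | ⟪w, x⟫ = c})) = 0 := by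
  obtain hempty | ⟨o, ho⟩ :=
    (relBoundary {x | ⟪w, x⟫ = c} (B ∩ {x | ⟪w, x⟫ = c})).eq_empty_or_nonempty
  · rw [hempty, measure_empty]
  let chart (u : (ℝ ∙ w)ᗮ) : EuclideanSpace ℝ (Fin (d + 1)) := u + o
  have isometry_chart : Isometry chart := (isometry_add_right o).comp isometry_subtype_coe
  have convex_preimage : Convex ℝ (chart ⁻¹' B) :=
    (hB.translate_preimage_left o).linear_preimage (ℝ ∙ w)ᗮ.subtype
  have exists_chart_eq {y : EuclideanSpace ℝ (Fin (d + 1))} (hy : ⟪w, y⟫ = c) :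
      ∃ u, chart u = y := by
    refine ⟨⟨y - o, Submodule.mem_orthogonal_singleton_iff_inner_right.2 ?_⟩, sub_add_cancel y o⟩
    rw [inner_sub_right, hy, ho.1.2, sub_self]
  have subset_image : relBoundary {x | ⟪w, x⟫ = c} (B ∩ {x | ⟪w, x⟫ = c}) ⊆
      chart '' frontier (chart ⁻¹' B) := by
    rintro y ⟨⟨hyB, hyc⟩, hyR⟩
    obtain ⟨u, rfl⟩ := exists_chart_eq hyc
    refine ⟨u, ⟨subset_closure hyB, fun hI => hyR ?_⟩, rfl⟩
    obtain ⟨ε, hε, hball⟩ := Metric.mem_nhds_iff.1 (mem_interior_iff_mem_nhds.1 hI)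
    refine ⟨ε, hε, fun z ⟨hz, hzc⟩ => ⟨?_, hzc⟩⟩
    obtain ⟨v, rfl⟩ := exists_chart_eq hzc
    exact hball (mem_ball.2 ((isometry_chart.dist_eq v u).symm.trans_lt hz))
  have : (μH[(d : ℝ)] : Measure (ℝ ∙ w)ᗮ).IsAddHaarMeasure := by
    have finrank_eq : finrank ℝ (ℝ ∙ w)ᗮ = d := Submodule.finrank_orthogonal_span_singleton hw
    rw [← congrArg (Nat.cast : ℕ → ℝ) finrank_eq]
    infer_instance
  refine measure_mono_null subset_image ?_
  rw [isometry_chart.hausdorffMeasure_image (Or.inl d.cast_nonneg)]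
  exact convex_preimage.addHaar_frontier _

end HyperplaneSection

/-- Comparison of the lateral `Φ`-perimeter of the cone `𝒞(b, B ∩ ∂H)` with the
`Φ`-perimeter of `∂B` outside the half-space `H` (with inner normal `ν`). -/
theorem cone_lateral_perimeter_le_cap_perimeter
    (n : ℕ) (hn : 2 ≤ n)
    (Φ : EuclideanSpace ℝ (Fin n) → ℝ)
    (hΦ0 : ∀ x, 0 ≤ Φ x)
    (hΦhom : ∀ l : ℝ, 0 < l → ∀ x, Φ (l • x) = l * Φ x)
    (hΦconv : ConvexOn ℝ Set.univ Φ)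
    (B : Set (EuclideanSpace ℝ (Fin n)))
    (hBcp : IsCompact B) (hBcv : Convex ℝ B) (hBint : (interior B).Nonempty)
    (ν : EuclideanSpace ℝ (Fin n)) (hν : ‖ν‖ = 1) (c : ℝ)
    -- `B ∩ ∂H` has nonempty interior relative to the hyperplane `∂H`:
    (hcap : ∃ x ∈ B ∩ {x : EuclideanSpace ℝ (Fin n) | ⟪ν, x⟫ = c}, ∃ ε > (0 : ℝ),
      ball x ε ∩ {x : EuclideanSpace ℝ (Fin n) | ⟪ν, x⟫ = c} ⊆ B)
    (b : EuclideanSpace ℝ (Fin n)) (hbB : b ∈ B)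
    (hbH : b ∉ {x : EuclideanSpace ℝ (Fin n) | ⟪ν, x⟫ ≥ c})
    -- inner unit normal fields of the cone `C = 𝒞(b, B ∩ ∂H)` and of `B`:
    (νC νB : EuclideanSpace ℝ (Fin n) → EuclideanSpace ℝ (Fin n))
    (hνC : ∀ᵐ x ∂(μH[(n : ℝ) - 1].restrict
        (frontier (coneOver b (B ∩ {x : EuclideanSpace ℝ (Fin n) | ⟪ν, x⟫ = c})))),
      IsInnerNormalAt (coneOver b (B ∩ {x : EuclideanSpace ℝ (Fin n) | ⟪ν, x⟫ = c})) x (νC x))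
    (hνB : ∀ᵐ x ∂(μH[(n : ℝ) - 1].restrict (frontier B)), IsInnerNormalAt B x (νB x)) :
    ∫⁻ x in coneOver b
        (relBoundary {x : EuclideanSpace ℝ (Fin n) | ⟪ν, x⟫ = c}
          (B ∩ {x : EuclideanSpace ℝ (Fin n) | ⟪ν, x⟫ = c})),
      ENNReal.ofReal (Φ (νC x)) ∂μH[(n : ℝ) - 1] ≤
    ∫⁻ x in frontier B ∩ {x : EuclideanSpace ℝ (Fin n) | ⟪ν, x⟫ < c},
      ENNReal.ofReal (Φ (νB x)) ∂μH[(n : ℝ) - 1] := by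
  obtain ⟨d, rfl⟩ : ∃ d, n = d + 1 := Nat.exists_eq_add_one.2 (zero_lt_two.trans_le hn)
  rw [show ((d + 1 : ℕ) : ℝ) - 1 = d by simp] at hνC hνB ⊢
  set E := B ∩ {x | ⟪ν, x⟫ = c}
  have hb : ⟪ν, b⟫ < c := not_le.1 hbH
  have hE : E ⊆ {x | ⟪ν, x⟫ = c} := inter_subset_right
  have isCompact_E : IsCompact E := hBcp.inter_right (isClosed_eq (by fun_prop) continuous_const)
  obtain ⟨x, hx, ε, hε, hball⟩ := hcap
  have span_cone : vectorSpan ℝ (coneOver b E) = ⊤ :=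
    vectorSpan_eq_top_of_ball_inter_hyperplane_subset hε hx.2
      (fun z hz => subset_coneOver ⟨hball hz, hz.2⟩) (apex_mem_coneOver ⟨x, hx⟩) hb.ne
  have relBoundary_null : μH[(d : ℝ)] (relBoundary {x | ⟪ν, x⟫ = c} E) = 0 :=
    hausdorffMeasure_relBoundary_hyperplane_eq_zero hBcv (ne_zero_of_norm_ne_zero (by simp [hν])) c
  have lateral_ae_subset : coneOver b (relBoundary {x | ⟪ν, x⟫ = c} E) ≤ᵐ[μH[(d : ℝ)]]
      (frontier (coneOver b E) ∩ {x | ⟪ν, x⟫ < c} : Set _) := by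
    filter_upwards [measure_eq_zero_iff_ae_notMem.1 relBoundary_null] with z hz hz_lateral
    exact ⟨coneOver_relBoundary_subset_frontier hb hE hz_lateral,
      (coneOver_subset_halfSpace_union hb (sdiff_subset.trans hE) hz_lateral).resolve_right hz⟩
  exact (lintegral_mono_set' lateral_ae_subset).trans <|
    setLIntegral_frontier_inter_halfSpace_le hBcp hBcv (isCompact_coneOver isCompact_E)
      (coneOver_subset hBcv hbB inter_subset_left) span_cone subset_coneOver hΦhom hΦconv hνC hνB
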